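/- Let (R, 𝔪, k) be a regular local ring of dimension 3. Let (m, n, r) be a tuple of positive integers with r = m − 3(n−2) ≥ 2, n ≥ 4, and m ≥ 2n+1 ≥ 9. Then there exists an ideal J ⊆ R with pd_R(R/J) = 3 such that R/J has Tor-algebra class G(r) and realizes the tuple (m, n, r): the minimal free resolution 0 → F_3 → F_2 → F_1 → R of R/J has rank_R(F_1) = m and rank_R(F_3) = n. -/

import Mathlib

open IsLocalRing

/-- `R/J` has projective dimension 3, Tor-algebra class `G(r)` (normal form
`f̄₁ⁱ f̄₂ⁱ = f̄₃¹` for `1 ≤ i ≤ r`, all other products of basis elements zero)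
and realizes the tuple `(m, n, r)`: its minimal free resolution
`0 → F₃ → F₂ → F₁ → R` has `rank F₁ = m` and `rank F₃ = n`. -/
def HasTorClassGWithRanks (R : Type) [CommRing R] [IsLocalRing R]
    (J : Ideal R) (m n r : ℕ) : Prop :=
  ∃ (n2 : ℕ) (h3 : 0 < n), r ≤ m ∧ r ≤ n2 ∧
  ∃ (d1 : (Fin m → R) →ₗ[R] R) (d2 : (Fin n2 → R) →ₗ[R] (Fin m → R))
    (d3 : (Fin n → R) →ₗ[R] (Fin n2 → R))
    (m11 : (Fin m → R) →ₗ[R] (Fin m → R) →ₗ[R] (Fin n2 → R))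
    (m12 : (Fin m → R) →ₗ[R] (Fin n2 → R) →ₗ[R] (Fin n → R)),
    -- minimal free resolution of `R/J`
    LinearMap.range d1 = J ∧
    LinearMap.ker d1 = LinearMap.range d2 ∧
    LinearMap.ker d2 = LinearMap.range d3 ∧
    LinearMap.ker d3 = ⊥ ∧
    (∀ v, d1 v ∈ maximalIdeal R) ∧
    (∀ v, d2 v ∈ maximalIdeal R • (⊤ : Submodule R (Fin m → R))) ∧
    (∀ v, d3 v ∈ maximalIdeal R • (⊤ : Submodule R (Fin n2 → R))) ∧
    -- DG-algebra axioms
    (∀ a b, d2 (m11 a b) = d1 a • b - d1 b • a) ∧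
    (∀ a, m11 a a = 0) ∧ (∀ a b, m11 a b = - m11 b a) ∧
    (∀ a z, d3 (m12 a z) = d1 a • z - m11 a (d2 z)) ∧
    (∀ a b c, m12 c (m11 a b) = m12 a (m11 b c)) ∧
    -- `G(r)` normal form for the induced products on `F ⊗ k`
    (∀ a b : Fin m, m11 (Pi.single a 1) (Pi.single b 1) ∈
      maximalIdeal R • (⊤ : Submodule R (Fin n2 → R))) ∧
    (∀ (a : Fin m) (b : Fin n2),
      m12 (Pi.single a 1) (Pi.single b 1) -
        (if (a : ℕ) = (b : ℕ) ∧ (a : ℕ) < r then Pi.single (⟨0, h3⟩ : Fin n) 1 else 0) ∈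
      maximalIdeal R • (⊤ : Submodule R (Fin n → R)))

/-!
Over `R`, a Gorenstein ideal of grade three is generated by the submaximal Pfaffians of an
alternating form on `R^(2l+1)`, and its self-dual resolution has class `G(2l+1)`: each generator
pairs with a syzygy to the generator of the socle. Trimming it, that is replacing a generator `g` by
`𝔪 g`, raises the type by one and leaves the pairing of the other generators intact.

Label the basis by `-l, …, l` and let `x₀, x₁, x₂` be the generators of `𝔪`. The form pairs vectors
whose labels add up to `-1`, `1` or `0`, with entries `x₀`, `x₁` and multiples of `x₂`, so that its
Pfaffians generate an ideal with radical `𝔪`. Its resolution and the product on it come from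
contractions of the top form in the exterior algebra. The trimmed resolution is a mapping cone
with one copy of the Koszul complex for each of the `n - 1` trimmed generators. It fails to be
minimal exactly at `3` or `4` unit entries, according to the parity of `r + n`, and cancelling these
gives the rank `m = r + 3 (n - 2)`. The products other than the pairing vanish modulo `𝔪` since
Pfaffians lie in a high power of `𝔪`.
-/

open Module

/-! ### Resolutions of length three with a product -/

/-- A free-resolution-shaped complex `0 → F₃ → F₂ → F₁ → R`, exact except at `R`, together with an
alternating product of degree-one elements satisfying the Leibniz rule. The product
`F₁ × F₂ → F₃` is not part of the data: `d₃` being injective, it is determined by the Leibniz rule,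
see `DGResolution.mul₁₂`. -/
structure DGResolution (R F₁ F₂ F₃ : Type*) [CommRing R] [AddCommGroup F₁] [AddCommGroup F₂]
    [AddCommGroup F₃] [Module R F₁] [Module R F₂] [Module R F₃] where
  d₁ : F₁ →ₗ[R] R
  d₂ : F₂ →ₗ[R] F₁
  d₃ : F₃ →ₗ[R] F₂
  mul₁₁ : F₁ →ₗ[R] F₁ →ₗ[R] F₂
  exact_d₂_d₁ : Function.Exact d₂ d₁
  exact_d₃_d₂ : Function.Exact d₃ d₂
  d₃_injective : Function.Injective d₃
  d₂_mul₁₁ : ∀ a b, d₂ (mul₁₁ a b) = d₁ a • b - d₁ b • a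
  mul₁₁_self : ∀ a, mul₁₁ a a = 0

namespace DGResolution

variable {R F₁ F₂ F₃ : Type*} [CommRing R] [AddCommGroup F₁] [AddCommGroup F₂] [AddCommGroup F₃]
  [Module R F₁] [Module R F₂] [Module R F₃] (X : DGResolution R F₁ F₂ F₃)

theorem mul₁₁_antisymm (a b : F₁) : X.mul₁₁ a b = -X.mul₁₁ b a :=
  (LinearMap.IsAlt.neg X.mul₁₁_self b a).symm

theorem exists_mul₁₂ :
    ∃ μ : F₁ →ₗ[R] F₂ →ₗ[R] F₃, ∀ a z, X.d₃ (μ a z) = X.d₁ a • z - X.mul₁₁ a (X.d₂ z) := by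
  have h (a : F₁) (z : F₂) : ∃ v, X.d₃ v = X.d₁ a • z - X.mul₁₁ a (X.d₂ z) :=
    (X.exact_d₃_d₂ _).1 (by simp [X.d₂_mul₁₁, X.exact_d₂_d₁.apply_apply_eq_zero])
  choose μ hμ using h
  refine ⟨LinearMap.mk₂ R μ ?_ ?_ ?_ ?_, hμ⟩ <;>
  · intros
    apply X.d₃_injective
    simp only [map_add, map_smul, hμ, LinearMap.add_apply, LinearMap.smul_apply, smul_eq_mul]
    module

/-- The product `F₁ × F₂ → F₃`, the unique one satisfying the Leibniz rule `d₃_mul₁₂`. -/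
noncomputable def mul₁₂ : F₁ →ₗ[R] F₂ →ₗ[R] F₃ :=
  X.exists_mul₁₂.choose

theorem d₃_mul₁₂ (a : F₁) (z : F₂) :
    X.d₃ (X.mul₁₂ a z) = X.d₁ a • z - X.mul₁₁ a (X.d₂ z) :=
  X.exists_mul₁₂.choose_spec a z

theorem mul₁₂_mul₁₁ (a b c : F₁) : X.mul₁₂ c (X.mul₁₁ a b) = X.mul₁₂ a (X.mul₁₁ b c) := by
  apply X.d₃_injective
  simp only [d₃_mul₁₂, d₂_mul₁₁, map_sub, map_smul]
  rw [X.mul₁₁_antisymm c a, X.mul₁₁_antisymm c b]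
  module

theorem mul₁₂_eq_of_d₃_eq {a : F₁} {z : F₂} {v : F₃}
    (h : X.d₃ v = X.d₁ a • z - X.mul₁₁ a (X.d₂ z)) : X.mul₁₂ a z = v :=
  X.d₃_injective ((X.d₃_mul₁₂ a z).trans h.symm)

/-- The resolution with `F₁` replaced by a submodule `S`; in degree two only the elements with
differential in `S` survive. For `S` the kernel of a functional through which a unit entry of `d₂`
factors, this cancels that entry. -/
def restrict (S : Submodule R F₁) : DGResolution R S (S.comap X.d₂) F₃ where
  d₁ := X.d₁ ∘ₗ S.subtype
  d₂ := X.d₂.restrict fun _ hz => hz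
  d₃ := X.d₃.codRestrict _ fun v => by simp [X.exact_d₃_d₂.apply_apply_eq_zero]
  mul₁₁ := LinearMap.mk₂ R
    (fun a b => ⟨X.mul₁₁ a b, by
      rw [Submodule.mem_comap, X.d₂_mul₁₁]
      exact S.sub_mem (S.smul_mem _ b.2) (S.smul_mem _ a.2)⟩)
    (fun _ _ _ => Subtype.ext (by simp)) (fun _ _ _ => Subtype.ext (by simp))
    (fun _ _ _ => Subtype.ext (by simp)) (fun _ _ _ => Subtype.ext (by simp))
  exact_d₂_d₁ a := by
    refine ⟨fun h => ?_, ?_⟩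
    · obtain ⟨z, hz⟩ := (X.exact_d₂_d₁ a).1 h
      exact ⟨⟨z, by simp [hz]⟩, Subtype.ext hz⟩
    · rintro ⟨z, rfl⟩
      exact X.exact_d₂_d₁.apply_apply_eq_zero z
  exact_d₃_d₂ z := by
    refine ⟨fun h => ?_, ?_⟩
    · obtain ⟨v, hv⟩ := (X.exact_d₃_d₂ z).1 (congrArg Subtype.val h)
      exact ⟨v, Subtype.ext hv⟩
    · rintro ⟨v, rfl⟩
      exact Subtype.ext (X.exact_d₃_d₂.apply_apply_eq_zero v)
  d₃_injective _ _ h := X.d₃_injective (congrArg Subtype.val h)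
  d₂_mul₁₁ a b := Subtype.ext (X.d₂_mul₁₁ a b)
  mul₁₁_self a := Subtype.ext (X.mul₁₁_self a)

theorem restrict_mul₁₂ (S : Submodule R F₁) (a : S) (z : S.comap X.d₂) :
    (X.restrict S).mul₁₂ a z = X.mul₁₂ a z :=
  mul₁₂_eq_of_d₃_eq _ (Subtype.ext (X.d₃_mul₁₂ a z))

end DGResolution

section Cone

variable {R F₁ F₂ F₃ K₁ K₂ K₃ : Type*} [CommRing R] [AddCommGroup F₁] [AddCommGroup F₂]
  [AddCommGroup F₃] [AddCommGroup K₁] [AddCommGroup K₂] [AddCommGroup K₃] [Module R F₁]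
  [Module R F₂] [Module R F₃] [Module R K₁] [Module R K₂] [Module R K₃]

theorem exists_alternating_lift [Free R F₁] (κ : K₂ →ₗ[R] F₂) (c : F₁ →ₗ[R] F₁ →ₗ[R] F₂)
    (hself : ∀ a, c a a = 0) (hc : ∀ a b, c a b ∈ LinearMap.range κ) :
    ∃ W : F₁ →ₗ[R] F₁ →ₗ[R] K₂, (∀ a, W a a = 0) ∧ ∀ a b, κ (W a b) = c a b := by
  have b := Free.chooseBasis R F₁
  obtain ⟨_, -⟩ := exists_wellFoundedLT (Free.ChooseBasisIndex R F₁)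
  choose f hf using hc
  let T : F₁ →ₗ[R] F₁ →ₗ[R] K₂ :=
    b.constr R fun i => b.constr R fun j => if i < j then f (b i) (b j) else 0
  have hcomp : (T - T.flip).compr₂ κ = c := by
    refine LinearMap.ext_basis b b fun i j => ?_
    have hanti : -c (b j) (b i) = c (b i) (b j) := LinearMap.IsAlt.neg hself _ _
    rcases lt_trichotomy i j with h | rfl | h
    · simp [T, h, h.not_gt, hf]
    · simp [T, hself]
    · simpa [T, h, h.not_gt, hf] using hanti
  exact ⟨T - T.flip, fun a => by simp, fun a b => LinearMap.congr_fun₂ hcomp a b⟩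

/-- The data of an iterated mapping cone `0 → F₃ × K₃ → F₂ × K₂ → K₁ → R` over a resolution
`D`: a resolution `0 → K₃ → K₂ → K₁` of `K₁ / ker α`, a lift `(ψ, η)` of `D` to it, and a lift `W`
of the product. -/
structure ConeData (D : DGResolution R F₁ F₂ F₃) (K₁ K₂ K₃ : Type*) [AddCommGroup K₁]
    [AddCommGroup K₂] [AddCommGroup K₃] [Module R K₁] [Module R K₂] [Module R K₃] where
  α : K₁ →ₗ[R] F₁
  κ₂ : K₂ →ₗ[R] K₁
  κ₃ : K₃ →ₗ[R] K₂
  ψ : F₂ →ₗ[R] K₁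
  η : F₃ →ₗ[R] K₂
  W : K₁ →ₗ[R] K₁ →ₗ[R] K₂
  α_ψ : ∀ z, α (ψ z) = D.d₂ z
  exact_κ₂_α : Function.Exact κ₂ α
  exact_κ₃_κ₂ : Function.Exact κ₃ κ₂
  κ₃_injective : Function.Injective κ₃
  ψ_d₃_add : ∀ v, ψ (D.d₃ v) + κ₂ (η v) = 0
  W_self : ∀ a, W a a = 0
  κ₂_W : ∀ a b, κ₂ (W a b) = D.d₁ (α a) • b - D.d₁ (α b) • a - ψ (D.mul₁₁ (α a) (α b))

namespace ConeData

variable {D : DGResolution R F₁ F₂ F₃} (C : ConeData D K₁ K₂ K₃)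

/-- The mapping cone, resolving `R / d₁ (α K₁)`. -/
def cone : DGResolution R K₁ (F₂ × K₂) (F₃ × K₃) where
  d₁ := D.d₁ ∘ₗ C.α
  d₂ := C.ψ.coprod C.κ₂
  d₃ := (D.d₃ ∘ₗ LinearMap.fst R F₃ K₃).prod (C.η.coprod C.κ₃)
  mul₁₁ := LinearMap.mk₂ R (fun a b => (D.mul₁₁ (C.α a) (C.α b), C.W a b))
    (by simp) (by simp) (by simp) (by simp)
  exact_d₂_d₁ a := by
    refine ⟨fun h => ?_, ?_⟩
    · obtain ⟨z, hz⟩ := (D.exact_d₂_d₁ (C.α a)).1 h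
      obtain ⟨w, hw⟩ := (C.exact_κ₂_α (a - C.ψ z)).1 (by simp [C.α_ψ, hz])
      exact ⟨(z, w), by simp [hw]⟩
    · rintro ⟨z, rfl⟩
      simp [C.α_ψ, C.exact_κ₂_α.apply_apply_eq_zero, D.exact_d₂_d₁.apply_apply_eq_zero]
  exact_d₃_d₂ := by
    rintro ⟨z, w⟩
    refine ⟨fun h => ?_, ?_⟩
    · have hz : D.d₂ z = 0 := by
        simpa [C.α_ψ, C.exact_κ₂_α.apply_apply_eq_zero] using congrArg C.α h
      obtain ⟨v, rfl⟩ := (D.exact_d₃_d₂ z).1 hz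
      have hw : C.κ₂ (w - C.η v) = 0 := by
        rw [map_sub, ← add_sub_add_left_eq_sub _ _ (C.ψ (D.d₃ v)), C.ψ_d₃_add]
        simpa using h
      obtain ⟨u, hu⟩ := (C.exact_κ₃_κ₂ _).1 hw
      exact ⟨(v, u), by simp [hu]⟩
    · rintro ⟨⟨v, u⟩, h⟩
      rw [← h]
      simpa [C.exact_κ₃_κ₂.apply_apply_eq_zero] using C.ψ_d₃_add v
  d₃_injective := by
    refine (injective_iff_map_eq_zero _).2 fun ⟨v, u⟩ h => ?_
    obtain ⟨h₁, h₂⟩ := Prod.ext_iff.1 h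
    obtain rfl : v = 0 := (map_eq_zero_iff _ D.d₃_injective).1 h₁
    obtain rfl : u = 0 := (map_eq_zero_iff _ C.κ₃_injective).1 (by simpa using h₂)
    rfl
  d₂_mul₁₁ a b := by simp [C.κ₂_W]
  mul₁₁_self a := by simp [D.mul₁₁_self, C.W_self]

theorem cone_mul₁₂_fst (a : K₁) (z : F₂ × K₂) :
    (C.cone.mul₁₂ a z).1 = D.mul₁₂ (C.α a) z.1 := by
  refine (D.mul₁₂_eq_of_d₃_eq ?_).symm
  have h := congrArg Prod.fst (C.cone.d₃_mul₁₂ a z)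
  simpa [cone, C.α_ψ, C.exact_κ₂_α.apply_apply_eq_zero] using h

end ConeData

end Cone

/-! ### Multiplication of class `G` -/

section SMulTop

variable {R M N ι : Type*} [CommRing R] [AddCommGroup M] [AddCommGroup N] [Module R M] [Module R N]
  {I : Ideal R}

theorem map_mem_smul_top (f : M →ₗ[R] N) {v : M} (hv : v ∈ I • (⊤ : Submodule R M)) :
    f v ∈ I • (⊤ : Submodule R N) :=
  Submodule.smul_top_le_comap_smul_top I f hv

theorem mem_smul_top_iff_repr (b : Basis ι R M) {v : M} :
    v ∈ I • (⊤ : Submodule R M) ↔ ∀ i, b.repr v i ∈ I := by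
  refine ⟨fun hv i => ?_, fun hv => ?_⟩
  · simpa using map_mem_smul_top (b.coord i) hv
  · rw [← b.linearCombination_repr v, Finsupp.linearCombination_apply]
    exact Submodule.sum_mem _ fun i _ => Submodule.smul_mem_smul (hv i) trivial

end SMulTop

section KernelBasis

variable {R M ι C : Type*} [CommRing R] [AddCommGroup M] [Module R M] [Fintype C]
  {b : Basis ι R M} {ℓ : M →ₗ[R] C → R} {c : C → ι} {ε : C → Rˣ}

variable (b ℓ c ε) in
/-- If `ℓ (b (c t)) = ε t • Pi.single t 1`, this is the projection onto the kernel of `ℓ` along the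
span of the vectors `b (c t)`. -/
noncomputable def kerProj : M →ₗ[R] M :=
  LinearMap.id - ∑ t, (LinearMap.proj t ∘ₗ ℓ).smulRight ((↑(ε t)⁻¹ : R) • b (c t))

theorem kerProj_apply (v : M) :
    kerProj b ℓ c ε v = v - ∑ t, ℓ v t • (↑(ε t)⁻¹ : R) • b (c t) := by
  simp [kerProj]

theorem kerProj_of_mem_ker {v : M} (hv : v ∈ LinearMap.ker ℓ) : kerProj b ℓ c ε v = v := by
  simp [kerProj_apply, LinearMap.mem_ker.1 hv]

theorem kerProj_sub_mem_smul_top {I : Ideal R} {v : M} (hv : ∀ t, ℓ v t ∈ I) :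
    kerProj b ℓ c ε v - v ∈ I • (⊤ : Submodule R M) := by
  rw [kerProj_apply, sub_sub_cancel_left]
  exact neg_mem <| sum_mem fun t _ => Submodule.smul_mem_smul (hv t) trivial

variable [DecidableEq C] (hℓ : ∀ t, ℓ (b (c t)) = Pi.single t (ε t : R))
include hℓ

theorem kerProj_mem_ker (v : M) : kerProj b ℓ c ε v ∈ LinearMap.ker ℓ := by
  ext t
  simp [kerProj_apply, hℓ, Finset.sum_apply, Pi.single_apply]

theorem kerProj_basis (t : C) : kerProj b ℓ c ε (b (c t)) = 0 := by
  simp [kerProj_apply, hℓ, Pi.single_apply, ite_smul, smul_smul]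

theorem exists_basis_ker :
    ∃ b' : Basis {i // i ∉ Set.range c} R (LinearMap.ker ℓ),
      (∀ v i, b'.repr v i = b.repr v i) ∧ ∀ i, (b' i : M) = kerProj b ℓ c ε (b i) := by
  classical
  let coords : LinearMap.ker ℓ →ₗ[R] {i // i ∉ Set.range c} → R :=
    LinearMap.pi fun i => b.coord i ∘ₗ (LinearMap.ker ℓ).subtype
  let e (i : {i // i ∉ Set.range c}) : LinearMap.ker ℓ :=
    ⟨kerProj b ℓ c ε (b i), kerProj_mem_ker hℓ _⟩
  have hcoords (i) : coords (e i) = Pi.single i 1 := by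
    ext j
    have hj (t : C) : c t ≠ j := fun h => j.2 ⟨t, h⟩
    simp [coords, e, kerProj_apply, Finsupp.single_apply, hj, Pi.single_apply, Subtype.ext_iff,
      eq_comm]
  have hindep : LinearIndependent R e := by
    refine LinearIndependent.of_comp coords ?_
    convert Pi.linearIndependent_single_one {i // i ∉ Set.range c} R using 1
    exact funext hcoords
  have hspan : ⊤ ≤ Submodule.span R (Set.range e) := by
    let π : M →ₗ[R] LinearMap.ker ℓ := (kerProj b ℓ c ε).codRestrict _ (kerProj_mem_ker hℓ)
    have hπ : Submodule.span R (Set.range b) ≤ (Submodule.span R (Set.range e)).comap π := by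
      refine Submodule.span_le.2 (Set.range_subset_iff.2 fun i => ?_)
      by_cases hi : i ∈ Set.range c
      · obtain ⟨t, rfl⟩ := hi
        have h0 : π (b (c t)) = 0 := Subtype.ext (kerProj_basis hℓ t)
        simp [h0]
      · exact Submodule.subset_span ⟨⟨i, hi⟩, rfl⟩
    intro v _
    have hv : π v = v := Subtype.ext (kerProj_of_mem_ker v.2)
    exact hv ▸ hπ (b.mem_span v)
  obtain ⟨b', hb'⟩ : ∃ b' : Basis {i // i ∉ Set.range c} R (LinearMap.ker ℓ), ⇑b' = e :=
    ⟨Basis.mk hindep hspan, Basis.coe_mk hindep hspan⟩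
  have hrepr : Finsupp.lcoeFun ∘ₗ b'.repr.toLinearMap = coords := b'.ext fun i => by
    rw [hb', hcoords, ← hb']
    simp [Finsupp.single_eq_pi_single]
  exact ⟨b', fun v i => congrFun (LinearMap.congr_fun hrepr v) i, fun i => by rw [hb']⟩

end KernelBasis

section ClassG

variable {R F₁ F₂ F₃ G₁ G₂ P : Type*} [CommRing R] [AddCommGroup F₁] [AddCommGroup F₂]
  [AddCommGroup F₃] [Module R F₁] [Module R F₂] [Module R F₃]

/-- Modulo `I`, the differentials and the products `F₁ × F₁ → F₂` vanish, while among the products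
of members of the families `e₁`, `e₂` just the paired ones `e₁ (p₁ i) * e₂ (p₂ i)` survive, all
being equal to `e`. For `I` the maximal ideal and `e₁`, `e₂` bases, this says that the resolution
is minimal with multiplication of class `G(|P|)`. -/
structure DGResolution.IsClassG (X : DGResolution R F₁ F₂ F₃) (I : Ideal R) (e₁ : G₁ → F₁)
    (e₂ : G₂ → F₂) (e : F₃) (p₁ : P → G₁) (p₂ : P → G₂) : Prop where
  d₁_mem : ∀ a, X.d₁ a ∈ I
  d₂_mem : ∀ g, X.d₂ (e₂ g) ∈ I • (⊤ : Submodule R F₁)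
  d₃_mem : ∀ v, X.d₃ v ∈ I • (⊤ : Submodule R F₂)
  mul₁₁_mem : ∀ a b, X.mul₁₁ a b ∈ I • (⊤ : Submodule R F₂)
  mul₁₂_paired : ∀ i, X.mul₁₂ (e₁ (p₁ i)) (e₂ (p₂ i)) - e ∈ I • (⊤ : Submodule R F₃)
  mul₁₂_mem : ∀ g h, (∀ i, g = p₁ i → h ≠ p₂ i) →
    X.mul₁₂ (e₁ g) (e₂ h) ∈ I • (⊤ : Submodule R F₃)

variable {X : DGResolution R F₁ F₂ F₃} {I : Ideal R}

theorem DGResolution.IsClassG.mul₁₂_sub_ite_mem {e₁ : G₁ → F₁} {e₂ : G₂ → F₂} {e : F₃}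
    {p₁ : P → G₁} {p₂ : P → G₂} (hX : X.IsClassG I e₁ e₂ e p₁ p₂) {g : G₁} {h : G₂} {q : Prop}
    [Decidable q] (hq : q ↔ ∃ i, g = p₁ i ∧ h = p₂ i) :
    X.mul₁₂ (e₁ g) (e₂ h) - (if q then e else 0) ∈ I • (⊤ : Submodule R F₃) := by
  split_ifs with hpair
  · obtain ⟨i, rfl, rfl⟩ := hq.1 hpair
    exact hX.mul₁₂_paired i
  · rw [sub_zero]
    exact hX.mul₁₂_mem g h fun i hg hh => hpair (hq.2 ⟨i, hg, hh⟩)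

theorem mem_smul_top_of_coe_mem {S : Submodule R F₁} {b : Basis G₁ R F₁} {s : Set G₁}
    {b' : Basis {g // g ∉ s} R S} (hb' : ∀ v g, b'.repr v g = b.repr v g) {v : S}
    (hv : (v : F₁) ∈ I • (⊤ : Submodule R F₁)) : v ∈ I • (⊤ : Submodule R S) :=
  (mem_smul_top_iff_repr b').2 fun g => hb' v g ▸ (mem_smul_top_iff_repr b).1 hv g

theorem DGResolution.IsClassG.restrict {S : Submodule R F₁} {e₁ : G₁ → F₁} {e₂ : G₂ → F₂}
    {e₁' : G₁ → S} {e₂' : G₂ → S.comap X.d₂} {e : F₃} {p₁ : P → G₁} {p₂ : P → G₂}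
    (hX : X.IsClassG I e₁ e₂ e p₁ p₂)
    (hS₁ : ∀ v : S, (v : F₁) ∈ I • (⊤ : Submodule R F₁) → v ∈ I • (⊤ : Submodule R S))
    (hS₂ : ∀ v : S.comap X.d₂, (v : F₂) ∈ I • (⊤ : Submodule R F₂) →
      v ∈ I • (⊤ : Submodule R (S.comap X.d₂)))
    (he₁ : ∀ g, (e₁' g : F₁) = e₁ g)
    (he₂ : ∀ g, (e₂' g : F₂) - e₂ g ∈ I • (⊤ : Submodule R F₂)) :
    (X.restrict S).IsClassG I e₁' e₂' e p₁ p₂ := by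
  have hmul (g : G₁) (h : G₂) :
      X.mul₁₂ (e₁' g) (e₂' h) - X.mul₁₂ (e₁ g) (e₂ h) ∈ I • (⊤ : Submodule R F₃) := by
    rw [he₁, ← map_sub]
    exact map_mem_smul_top _ (he₂ h)
  refine ⟨fun a => hX.d₁_mem a, fun g => hS₁ _ ?_, fun v => hS₂ _ (hX.d₃_mem v),
    fun a b => hS₂ _ (hX.mul₁₁_mem a b), fun i => ?_, fun g h hgh => ?_⟩
  · change X.d₂ (e₂' g : F₂) ∈ _
    rw [← sub_add_cancel (e₂' g : F₂) (e₂ g), map_add]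
    exact add_mem (map_mem_smul_top _ (he₂ g)) (hX.d₂_mem g)
  · rw [X.restrict_mul₁₂]
    exact sub_add_sub_cancel (X.mul₁₂ (e₁' (p₁ i)) (e₂' (p₂ i))) _ e ▸
      add_mem (hmul _ _) (hX.mul₁₂_paired i)
  · rw [X.restrict_mul₁₂]
    exact sub_add_cancel (X.mul₁₂ (e₁' g) (e₂' h)) _ ▸ add_mem (hmul g h) (hX.mul₁₂_mem g h hgh)

theorem DGResolution.IsClassG.exists_restrict {C : Type*} [Finite C] [DecidableEq C]
    {b₁ : Basis G₁ R F₁} {b₂ : Basis G₂ R F₂} {c₁ : C → G₁} {c₂ : C → G₂} {ε : C → Rˣ} {e : F₃}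
    {p₁ : P → {g // g ∉ Set.range c₁}} {p₂ : P → {g // g ∉ Set.range c₂}}
    (hX : X.IsClassG I (fun g : {g // g ∉ Set.range c₁} => b₁ g)
      (fun g : {g // g ∉ Set.range c₂} => b₂ g) e p₁ p₂)
    (hc₁ : Function.Injective c₁)
    (hunit : ∀ t s, b₁.repr (X.d₂ (b₂ (c₂ t))) (c₁ s) = if s = t then (ε t : R) else 0) :
    ∃ (S : Submodule R F₁) (b₁' : Basis {g // g ∉ Set.range c₁} R S)
      (b₂' : Basis {g // g ∉ Set.range c₂} R (S.comap X.d₂)),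
      (X.restrict S).IsClassG I b₁' b₂' e p₁ p₂ := by
  classical
  have := Fintype.ofFinite C
  let ρ : F₁ →ₗ[R] C → R := LinearMap.pi fun t => b₁.coord (c₁ t)
  have hρ (t) : ρ (b₁ (c₁ t)) = Pi.single t ((1 : Rˣ) : R) := by
    ext s
    simp [ρ, Finsupp.single_apply, Pi.single_apply, hc₁.eq_iff, eq_comm]
  have hρd (t) : (ρ ∘ₗ X.d₂) (b₂ (c₂ t)) = Pi.single t (ε t : R) := by
    ext s
    simp [ρ, hunit, Pi.single_apply]
  obtain ⟨b₁', hrepr₁, hb₁⟩ := exists_basis_ker (ε := fun _ => 1) hρ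
  obtain ⟨b₂', hrepr₂, hb₂⟩ := exists_basis_ker hρd
  have he₁ (g : {g // g ∉ Set.range c₁}) : (b₁' g : F₁) = b₁ g := by
    have hg : b₁ g ∈ LinearMap.ker ρ := by
      ext t
      simpa [ρ] using Finsupp.single_eq_of_ne fun h => g.2 ⟨t, h⟩
    rw [hb₁, kerProj_of_mem_ker hg]
  have he₂ (g : {g // g ∉ Set.range c₂}) : (b₂' g : F₂) - b₂ g ∈ I • (⊤ : Submodule R F₂) := by
    rw [hb₂]
    exact kerProj_sub_mem_smul_top fun t => (mem_smul_top_iff_repr b₁).1 (hX.d₂_mem g) (c₁ t)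
  exact ⟨LinearMap.ker ρ, b₁', b₂', hX.restrict (fun _ => mem_smul_top_of_coe_mem hrepr₁)
    (fun _ => mem_smul_top_of_coe_mem hrepr₂) he₁ he₂⟩

end ClassG

theorem exists_equiv_fin_extending {G : Type*} [Fintype G] {r : ℕ} {p : Fin r → G}
    (hp : Function.Injective p) : ∃ σ : G ≃ Fin (Fintype.card G), ∀ i, (σ (p i) : ℕ) = i := by
  have hr : r ≤ Fintype.card G := by simpa using Fintype.card_le_of_injective p hp
  obtain ⟨τ, hτ⟩ := Set.MapsTo.exists_equiv_extend_of_card_eq (t := Finset.range (Fintype.card G))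
    (s := Set.range p) (f := Function.extend p Fin.val 0) (by simp)
    (by rintro _ ⟨i, rfl⟩; simpa [hp.extend_apply] using i.2.trans_le hr)
    (by rintro _ ⟨i, rfl⟩ _ ⟨j, rfl⟩ h; simpa [hp.extend_apply, Fin.ext_iff, hp.eq_iff] using h)
  refine ⟨τ.trans ((Equiv.subtypeEquivRight fun _ => Finset.mem_range).trans
    Fin.equivSubtype.symm), fun i => ?_⟩
  simpa [hp.extend_apply] using hτ _ ⟨i, rfl⟩

theorem exists_equiv_fin_pairing {G H P : Type*} [Fintype G] [Fintype H] [Fintype P] {p : P → G}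
    {q : P → H} (hp : Function.Injective p) (hq : Function.Injective q) :
    ∃ (σ : G ≃ Fin (Fintype.card G)) (τ : H ≃ Fin (Fintype.card H)),
      ∀ (a : Fin (Fintype.card G)) (b : Fin (Fintype.card H)),
        ((a : ℕ) = b ∧ (a : ℕ) < Fintype.card P) ↔ ∃ i, σ.symm a = p i ∧ τ.symm b = q i := by
  let π := (Fintype.equivFin P).symm
  obtain ⟨σ, hσ⟩ := exists_equiv_fin_extending (hp.comp π.injective)
  obtain ⟨τ, hτ⟩ := exists_equiv_fin_extending (hq.comp π.injective)
  refine ⟨σ, τ, fun a b => ⟨fun ⟨hab, ha⟩ => ⟨π ⟨a, ha⟩, ?_, ?_⟩, fun ⟨i, hi, hj⟩ => ?_⟩⟩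
  · simpa [Equiv.symm_apply_eq, Fin.ext_iff] using (hσ ⟨a, ha⟩).symm
  · simpa [Equiv.symm_apply_eq, Fin.ext_iff, hab] using (hτ ⟨a, ha⟩).symm
  · have ha := hσ (π.symm i)
    have hb := hτ (π.symm i)
    simp only [Function.comp_apply, Equiv.apply_symm_apply, ← hi, ← hj] at ha hb
    exact ⟨ha.trans hb.symm, ha ▸ (π.symm i).2⟩

theorem DGResolution.IsClassG.hasTorClassGWithRanks {R : Type} {F₁ F₂ F₃ G₁ G₂ G₃ P : Type*}
    [CommRing R] [IsLocalRing R] [AddCommGroup F₁] [AddCommGroup F₂] [AddCommGroup F₃]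
    [Module R F₁] [Module R F₂] [Module R F₃] [Fintype G₁] [Finite G₂] [Fintype G₃] [Fintype P]
    {X : DGResolution R F₁ F₂ F₃} {b₁ : Basis G₁ R F₁} {b₂ : Basis G₂ R F₂} {b₃ : Basis G₃ R F₃}
    {g : G₃} {p₁ : P → G₁} {p₂ : P → G₂}
    (hX : X.IsClassG (maximalIdeal R) b₁ b₂ (b₃ g) p₁ p₂)
    (hp₁ : Function.Injective p₁) (hp₂ : Function.Injective p₂) :
    HasTorClassGWithRanks R (LinearMap.range X.d₁) (Fintype.card G₁) (Fintype.card G₃)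
      (Fintype.card P) := by
  have := Fintype.ofFinite G₂
  obtain ⟨σ₁, σ₂, hσ⟩ := exists_equiv_fin_pairing hp₁ hp₂
  have hn : 0 < Fintype.card G₃ := Fintype.card_pos_iff.2 ⟨g⟩
  obtain ⟨σ₃, hσ₃⟩ := exists_equiv_fin_extending (p := fun _ : Fin 1 => g)
    (Function.injective_of_subsingleton _)
  let e₁ := (b₁.reindex σ₁).equivFun
  let e₂ := (b₂.reindex σ₂).equivFun
  let e₃ := (b₃.reindex σ₃).equivFun
  have hd₂ : Submodule.span R (Set.range b₂) ≤
      (maximalIdeal R • (⊤ : Submodule R F₁)).comap X.d₂ :=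
    Submodule.span_le.2 (Set.range_subset_iff.2 hX.d₂_mem)
  refine ⟨Fintype.card G₂, hn, Fintype.card_le_of_injective p₁ hp₁,
    Fintype.card_le_of_injective p₂ hp₂, X.d₁ ∘ₗ e₁.symm, e₁ ∘ₗ X.d₂ ∘ₗ e₂.symm,
    e₂ ∘ₗ X.d₃ ∘ₗ e₃.symm, (X.mul₁₁.compl₁₂ e₁.symm.toLinearMap e₁.symm.toLinearMap).compr₂ e₂,
    (X.mul₁₂.compl₁₂ e₁.symm.toLinearMap e₂.symm.toLinearMap).compr₂ e₃, ?_, ?_, ?_, ?_, ?_, ?_, ?_,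
    ?_, ?_, ?_, ?_, ?_, ?_, ?_⟩
  · rw [LinearMap.range_comp, LinearEquiv.range, Submodule.map_top]
  · ext v
    simp [X.exact_d₂_d₁ (e₁.symm v), e₂.symm.surjective.exists, ← e₁.eq_symm_apply]
  · ext z
    simp [X.exact_d₃_d₂ (e₂.symm z), e₃.symm.surjective.exists, ← e₂.eq_symm_apply]
  · exact LinearMap.ker_eq_bot.2 (e₂.injective.comp (X.d₃_injective.comp e₃.symm.injective))
  · exact fun v => hX.d₁_mem _
  · exact fun v => map_mem_smul_top e₁.toLinearMap (hd₂ (b₂.mem_span _))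
  · exact fun v => map_mem_smul_top e₂.toLinearMap (hX.d₃_mem _)
  · simp [X.d₂_mul₁₁]
  · simp [X.mul₁₁_self]
  · intro a b
    simp [X.mul₁₁_antisymm (e₁.symm a)]
  · simp [X.d₃_mul₁₂]
  · intro a b c
    simp [X.mul₁₂_mul₁₁ (e₁.symm a)]
  · exact fun a b => map_mem_smul_top e₂.toLinearMap (hX.mul₁₁_mem _ _)
  · intro a b
    have hg : e₃ (b₃ g) = Pi.single ⟨0, hn⟩ 1 := by
      have hσg : σ₃ g = ⟨0, hn⟩ := Fin.ext (hσ₃ 0)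
      simp [e₃, ← hσg, Finsupp.single_eq_pi_single]
    convert map_mem_smul_top e₃.toLinearMap (hX.mul₁₂_sub_ite_mem (hσ a b)) using 1
    simp [e₁, e₂, apply_ite e₃, hg]

/-! ### Koszul exactness and acyclicity -/

section Koszul

variable {R : Type*} [CommRing R]

/-- The Koszul complex `0 → M → M³ → M³ → M` of `x` with coefficients in `M` is exact at its first
three places. Indices are cyclic, so that `x (s + 1) • w (s + 2) - x (s + 2) • w (s + 1)` is the
coordinate `s` of the cross product of `x` and `w`. -/
structure KoszulExact (x : Fin 3 → R) (M : Type*) [AddCommGroup M] [Module R M] : Prop where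
  eq_zero : ∀ m : M, (∀ s, x s • m = 0) → m = 0
  exists_smul : ∀ t : Fin 3 → M, (∀ s, x (s + 1) • t (s + 2) = x (s + 2) • t (s + 1)) →
    ∃ m, ∀ s, t s = x s • m
  exists_cross : ∀ t : Fin 3 → M, ∑ s, x s • t s = 0 →
    ∃ w : Fin 3 → M, ∀ s, t s = x (s + 1) • w (s + 2) - x (s + 2) • w (s + 1)

variable {M : Type*} [AddCommGroup M] [Module R M] {x : Fin 3 → R}

theorem KoszulExact.of_isWeaklyRegular
    (hreg : RingTheory.Sequence.IsWeaklyRegular M [x 0, x 1, x 2]) : KoszulExact x M := by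
  have mem₁ (m : M) : m ∈ Ideal.ofList [x 0] • (⊤ : Submodule R M) ↔ ∃ a, x 0 • a = m := by
    simp [Submodule.ideal_span_singleton_smul, Submodule.mem_smul_pointwise_iff_exists]
  have mem₂ (m : M) : m ∈ Ideal.ofList [x 0, x 1] • (⊤ : Submodule R M) ↔
      ∃ a b, x 0 • a + x 1 • b = m := by
    simp [Submodule.ideal_span_singleton_smul, Submodule.mem_smul_pointwise_iff_exists,
      Submodule.sup_smul, Submodule.mem_sup]
  have cancel₀ (m n : M) (h : x 0 • m = x 0 • n) : m = n :=
    ((RingTheory.Sequence.isWeaklyRegular_cons_iff M _ _).1 hreg).1 h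
  have cancel₁ (m a : M) (h : x 0 • a = x 1 • m) : ∃ b, x 0 • b = m :=
    (mem₁ m).1 <| mem_of_isSMulRegular_quotient_of_smul_mem (hreg.regular_mod_prev 1 (by simp)) <|
      (mem₁ _).2 ⟨a, h⟩
  have cancel₂ (m a b : M) (h : x 0 • a + x 1 • b = x 2 • m) : ∃ c d, x 0 • c + x 1 • d = m :=
    (mem₂ m).1 <| mem_of_isSMulRegular_quotient_of_smul_mem (hreg.regular_mod_prev 2 (by simp)) <|
      (mem₂ _).2 ⟨a, b, h⟩
  refine ⟨fun m hm => cancel₀ m 0 (by simp [hm]), fun t ht => ?_, fun t ht => ?_⟩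
  · have ht₁ : x 2 • t 0 = x 0 • t 2 := ht 1
    have ht₂ : x 0 • t 1 = x 1 • t 0 := ht 2
    obtain ⟨m, hm⟩ := cancel₁ (t 0) (t 1) ht₂
    refine ⟨m, Fin.forall_fin_succ.2 ⟨hm.symm, Fin.forall_fin_two.2
      ⟨cancel₀ _ _ ?_, cancel₀ _ _ ?_⟩⟩⟩
    · change x 0 • t 1 = x 0 • x 1 • m
      rw [ht₂, ← hm, smul_comm]
    · change x 0 • t 2 = x 0 • x 2 • m
      rw [← ht₁, ← hm, smul_comm]
  · rw [Fin.sum_univ_three] at ht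
    obtain ⟨p, q, hpq⟩ := cancel₂ (t 2) (-t 0) (-t 1) (by linear_combination (norm := module) -ht)
    obtain ⟨u, hu⟩ := cancel₁ (t 1 + x 2 • q) (-(t 0 + x 2 • p)) (by
      rw [← hpq] at ht
      linear_combination (norm := module) -ht)
    refine ⟨![-q, p, -u], Fin.forall_fin_succ.2 ⟨cancel₀ _ _ ?_, Fin.forall_fin_two.2 ⟨?_, ?_⟩⟩⟩
    · change x 0 • t 0 = x 0 • (x 1 • -u - x 2 • p)
      linear_combination (norm := module) ht + x 2 • hpq + x 1 • hu
    · change t 1 = x 2 • -q - x 0 • -u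
      linear_combination (norm := module) -hu
    · change t 2 = x 0 • p - x 1 • -q
      linear_combination (norm := module) -hpq

theorem KoszulExact.pi {ι : Type*} (hx : KoszulExact x M) : KoszulExact x (ι → M) where
  eq_zero m hm := funext fun i => hx.eq_zero _ fun s => congrFun (hm s) i
  exists_smul t ht := by
    choose m hm using fun i => hx.exists_smul (fun s => t s i) fun s => congrFun (ht s) i
    exact ⟨m, fun s => funext fun i => hm i s⟩
  exists_cross t ht := by
    choose w hw using fun i => hx.exists_cross (fun s => t s i) (by simpa using congrFun ht i)
    exact ⟨fun s i => w i s, fun s => funext fun i => hw i s⟩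

theorem KoszulExact.of_free [Free R M] [Module.Finite R M] (hx : KoszulExact x R) :
    KoszulExact x M := by
  let e := (Free.chooseBasis R M).equivFun
  refine ⟨fun m hm => e.injective ?_, fun t ht => ?_, fun t ht => ?_⟩
  · simpa using hx.pi.eq_zero (e m) fun s => by rw [← map_smul, hm, map_zero]
  · obtain ⟨m, hm⟩ := hx.pi.exists_smul (fun s => e (t s)) fun s => by simp only [← map_smul, ht]
    exact ⟨e.symm m, fun s => e.injective (by simp [hm])⟩
  · obtain ⟨w, hw⟩ := hx.pi.exists_cross (fun s => e (t s)) (by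
      simp only [← map_smul, ← map_sum, ht, map_zero])
    exact ⟨fun s => e.symm (w s), fun s => e.injective (by simp [hw])⟩

theorem mem_of_pow_smul_mem {I : Ideal R} (hI : Ideal.span (Set.range x) = I) {Z Q : Submodule R M}
    (hQ : ∀ b ∈ Z, (∀ s, x s • b ∈ Q) → b ∈ Q) (N : ℕ) :
    ∀ b ∈ Z, (∀ c ∈ I ^ N, c • b ∈ Q) → b ∈ Q := by
  induction N with
  | zero => exact fun b _ h => by simpa using h 1
  | succ N ih =>
    refine fun b hb h => hQ b hb fun s => ih _ (Z.smul_mem _ hb) fun c hc => ?_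
    rw [smul_smul]
    exact h _ (Ideal.mul_mem_mul hc (hI ▸ Ideal.subset_span ⟨s, rfl⟩))

section Acyclicity

variable {M₁ M₂ M₃ : Type*} [AddCommGroup M₁] [AddCommGroup M₂] [AddCommGroup M₃] [Module R M₁]
  [Module R M₂] [Module R M₃] {I : Ideal R} {N : ℕ}
  {f : M₃ →ₗ[R] M₂} {g : M₂ →ₗ[R] M₁} {h : M₁ →ₗ[R] M}

theorem injective_of_pow_smul (hI : Ideal.span (Set.range x) = I) (h₃ : KoszulExact x M₃)
    (hf : ∀ c ∈ I ^ N, ∀ v, f v = 0 → c • v = 0) : Function.Injective f := by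
  refine (injective_iff_map_eq_zero f).2 fun v hv => ?_
  simpa using mem_of_pow_smul_mem hI (Z := LinearMap.ker f) (Q := ⊥)
    (fun b _ hb => by simpa using h₃.eq_zero b (by simpa using hb)) N v hv
    (fun c hc => by simpa using hf c hc v hv)

theorem exact_of_pow_smul_of_injective (hI : Ideal.span (Set.range x) = I) (h₃ : KoszulExact x M₃)
    (h₂ : KoszulExact x M₂) (hgf : g ∘ₗ f = 0) (hf : Function.Injective f)
    (hg : ∀ c ∈ I ^ N, ∀ z, g z = 0 → c • z ∈ LinearMap.range f) : Function.Exact f g := by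
  refine LinearMap.exact_iff.2 (le_antisymm (fun z hz => ?_) (LinearMap.range_le_ker_iff.2 hgf))
  refine mem_of_pow_smul_mem hI (fun b _ hb => ?_) N z hz fun c hc => hg c hc z hz
  choose t ht using hb
  obtain ⟨v, hv⟩ := h₃.exists_smul t fun s => hf <| by
    rw [map_smul, map_smul, ht, ht, smul_comm]
  refine ⟨v, sub_eq_zero.1 (h₂.eq_zero _ fun s => ?_)⟩
  rw [smul_sub, ← ht, hv, map_smul, sub_self]

theorem exact_of_pow_smul_of_exact (hI : Ideal.span (Set.range x) = I) (h₃ : KoszulExact x M₃)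
    (h₂ : KoszulExact x M₂) (h₁ : KoszulExact x M₁) (hhg : h ∘ₗ g = 0) (hf : Function.Injective f)
    (hfg : Function.Exact f g)
    (hh : ∀ c ∈ I ^ N, ∀ a, h a = 0 → c • a ∈ LinearMap.range g) : Function.Exact g h := by
  refine LinearMap.exact_iff.2 (le_antisymm (fun a ha => ?_) (LinearMap.range_le_ker_iff.2 hhg))
  refine mem_of_pow_smul_mem hI (fun b _ hb => ?_) N a ha fun c hc => hh c hc a ha
  choose t ht using hb
  have hcross (s : Fin 3) : ∃ v, f v = x (s + 1) • t (s + 2) - x (s + 2) • t (s + 1) := by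
    refine (hfg _).1 ?_
    rw [map_sub, map_smul, map_smul, ht, ht, smul_comm, sub_self]
  choose v hv using hcross
  obtain ⟨w, hw⟩ := h₃.exists_cross v <| hf <| by
    simp_rw [map_sum, map_smul, hv, map_zero, Fin.sum_univ_three]
    change x 0 • (x 1 • t 2 - x 2 • t 1) + x 1 • (x 2 • t 0 - x 0 • t 2) +
      x 2 • (x 0 • t 1 - x 1 • t 0) = 0
    module
  obtain ⟨z, hz⟩ := h₂.exists_smul (fun s => t s - f (w s)) fun s => by
    have h := (hv s).symm.trans (congrArg f (hw s))
    simp only [map_sub, map_smul] at h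
    linear_combination (norm := module) h
  refine ⟨z, sub_eq_zero.1 (h₁.eq_zero _ fun s => ?_)⟩
  rw [smul_sub, ← map_smul, ← hz, map_sub, ht, hfg.apply_apply_eq_zero, sub_zero, sub_self]

end Acyclicity

section Strictness

variable {I : Ideal R} (hI : Ideal.span (Set.range x) = I) (hx : KoszulExact x R)
include hI hx

theorem mem_of_sum_mul_mem_sq {a : Fin 3 → R} (ha : ∑ s, x s * a s ∈ I ^ 2) (s : Fin 3) :
    a s ∈ I := by
  have hxI (s : Fin 3) : x s ∈ I := hI ▸ Ideal.subset_span ⟨s, rfl⟩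
  obtain ⟨c, hcI, hc⟩ : ∃ c : Fin 3 → R, (∀ s, c s ∈ I) ∧ ∑ s, x s * c s = ∑ s, x s * a s := by
    rw [pow_two, ← smul_eq_mul] at ha
    nth_rw 2 [← hI] at ha
    obtain ⟨c, hcI, hc⟩ := (Submodule.mem_ideal_smul_span_iff_exists_sum I x _).1 ha
    exact ⟨c, hcI, by simpa [Finsupp.sum_fintype, mul_comm] using hc⟩
  obtain ⟨w, hw⟩ := hx.exists_cross (fun s => a s - c s) (by simp [mul_sub, hc])
  rw [← sub_add_cancel (a s) (c s), hw s]
  exact I.add_mem (I.sub_mem (I.mul_mem_right _ (hxI _)) (I.mul_mem_right _ (hxI _))) (hcI s)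

theorem mem_of_mul_mem_sq {a : R} {s : Fin 3} (ha : x s * a ∈ I ^ 2) : a ∈ I := by
  simpa using mem_of_sum_mul_mem_sq hI hx (a := Pi.single s a) (by simpa [Pi.single_apply]) s

theorem mem_of_cross_mem_sq {w : Fin 3 → R}
    (hw : ∀ s, x (s + 1) * w (s + 2) - x (s + 2) * w (s + 1) ∈ I ^ 2) (s : Fin 3) : w s ∈ I := by
  have hs : s ≠ s + 2 := by revert s; decide
  have h := hw (s + 1)
  rw [add_assoc, add_assoc, show s + (1 + 2) = s from add_zero s] at h
  have key := mem_of_sum_mul_mem_sq hI hx (a := fun t => if t = s + 2 then w s else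
    if t = s then -w (s + 2) else 0) ?_ (s + 2)
  · simpa using key
  · rw [Fintype.sum_eq_add _ _ hs fun t ht => by simp [ht.1, ht.2]]
    simpa [hs, sub_eq_neg_add] using h

end Strictness

end Koszul

/-! ### Pfaffians and the Buchsbaum-Eisenbud resolution -/

local infixr:80 " ⌋ " => CliffordAlgebra.contractLeft (Q := (0 : QuadraticForm _ _))

section Pfaffian

open ExteriorAlgebra
open CliffordAlgebra (changeForm contractLeft)

variable {R M : Type*} [CommRing R] [AddCommGroup M] [Module R M]

theorem ιInv_algebraMap (r : R) : ιInv (algebraMap R (ExteriorAlgebra R M) r) = 0 := by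
  let _ : Module Rᵐᵒᵖ M := Module.compHom _ ((RingHom.id R).fromOpposite mul_comm)
  have : IsCentralScalar R M := ⟨fun _ _ => rfl⟩
  change (toTrivSqZeroExt (algebraMap R (ExteriorAlgebra R M) r)).snd = 0
  rw [AlgHom.commutes, TrivSqZeroExt.algebraMap_eq_inl, TrivSqZeroExt.snd_inl]

theorem ιInv_ι_mul (m : M) (w : ExteriorAlgebra R M) :
    ιInv (ι R m * w) = algebraMapInv w • m := by
  let _ : Module Rᵐᵒᵖ M := Module.compHom _ ((RingHom.id R).fromOpposite mul_comm)
  have : IsCentralScalar R M := ⟨fun _ _ => rfl⟩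
  have hfst : (TrivSqZeroExt.fstHom R R M).comp toTrivSqZeroExt = algebraMapInv :=
    hom_ext (by ext; simp [algebraMapInv])
  change (toTrivSqZeroExt (ι R m * w)).snd = _
  rw [← hfst]
  simp

theorem algebraMapInv_ι_mul (m : M) (w : ExteriorAlgebra R M) :
    algebraMapInv (ι R m * w) = 0 := by
  simp [algebraMapInv]

theorem contractLeft_ι_mul (d : Dual R M) (m : M) (w : ExteriorAlgebra R M) :
    d ⌋ (ι R m * w) = d m • w - ι R m * d ⌋ w :=
  CliffordAlgebra.contractLeft_ι_mul d m w

theorem contractLeft_comm (d d' : Dual R M) (w : ExteriorAlgebra R M) :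
    d ⌋ d' ⌋ w = -d' ⌋ d ⌋ w :=
  CliffordAlgebra.contractLeft_comm d d' w

theorem algebraMapInv_contractLeft (d : Dual R M) (w : ExteriorAlgebra R M) :
    algebraMapInv (d ⌋ w) = d (ιInv w) := by
  have hι (m : M) (w : ExteriorAlgebra R M) :
      algebraMapInv (d ⌋ (ι R m * w)) = d (ιInv (ι R m * w)) := by
    simp [contractLeft_ι_mul, ιInv_ι_mul, algebraMapInv_ι_mul, mul_comm]
  induction w using CliffordAlgebra.left_induction with
  | algebraMap r =>
    rw [CliffordAlgebra.contractLeft_algebraMap, map_zero]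
    exact ((congrArg d (ιInv_algebraMap r)).trans (map_zero d)).symm
  | add v w hv hw => rw [map_add, map_add, map_add, map_add, hv, hw]
  | ι_mul w m _ => exact hι m w

variable {B : LinearMap.BilinForm R M}

/-- The linear automorphism `exp(∂_B)` of the exterior algebra, where `∂_B` is the contraction with
the alternating form `B`, as the change of quadratic form from `0` to `0` along `-B`. -/
def twist (hB : B.IsAlt) : ExteriorAlgebra R M →ₗ[R] ExteriorAlgebra R M :=
  changeForm (B := -B) (Q := 0) (Q' := 0) (by ext m; simp [hB m])

theorem twist_ι_mul (hB : B.IsAlt) (m : M) (w : ExteriorAlgebra R M) :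
    twist hB (ι R m * w) = ι R m * twist hB w + B m ⌋ twist hB w := by
  refine (CliffordAlgebra.changeForm_ι_mul _ m w).trans ?_
  simp [twist]

theorem twist_contractLeft (hB : B.IsAlt) (d : Dual R M) (w : ExteriorAlgebra R M) :
    twist hB (d ⌋ w) = d ⌋ twist hB w :=
  CliffordAlgebra.changeForm_contractLeft _ d w

/-- The Pfaffian: `v₁ ∧ ⋯ ∧ vₙ` is sent to the Pfaffian of the matrix `B vᵢ vⱼ`. -/
noncomputable def pfaffian (hB : B.IsAlt) : ExteriorAlgebra R M →ₗ[R] R :=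
  algebraMapInv.toLinearMap ∘ₗ twist hB

theorem pfaffian_ι_mul (hB : B.IsAlt) (m : M) (w : ExteriorAlgebra R M) :
    pfaffian hB (ι R m * w) = pfaffian hB (B m ⌋ w) := by
  simp only [pfaffian, LinearMap.comp_apply, twist_ι_mul, twist_contractLeft, map_add]
  simp [algebraMapInv_ι_mul]

section TopForm

variable (hB : B.IsAlt) {e : ExteriorAlgebra R M} (he : ∀ m, ι R m * e = 0)

theorem dual_ιInv_twist (a : Dual R M) (w : ExteriorAlgebra R M) :
    a (ιInv (twist hB w)) = pfaffian hB (a ⌋ w) := by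
  simp [pfaffian, twist_contractLeft, algebraMapInv_contractLeft]

/-- For a top form `e`, the vector of submaximal Pfaffians. -/
noncomputable def pfaffianVector (e : ExteriorAlgebra R M) : M :=
  ιInv (twist hB e)

/-- For a top form `e`, the alternating product given by the Pfaffians of corank three. -/
noncomputable def pfaffianMul (e : ExteriorAlgebra R M) : Dual R M →ₗ[R] Dual R M →ₗ[R] M :=
  LinearMap.mk₂ R (fun a b => ιInv (a ⌋ b ⌋ twist hB e))
    (by simp) (by simp) (by simp) (by simp)

theorem pfaffianMul_self (a : Dual R M) : pfaffianMul hB e a a = 0 :=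
  (congrArg ιInv (CliffordAlgebra.contractLeft_contractLeft a _)).trans (map_zero _)

theorem dual_pfaffianVector (a : Dual R M) :
    a (pfaffianVector hB e) = pfaffian hB (a ⌋ e) :=
  dual_ιInv_twist hB a e

theorem dual_pfaffianMul (d a b : Dual R M) :
    d (pfaffianMul hB e a b) = pfaffian hB (d ⌋ a ⌋ b ⌋ e) := by
  rw [← dual_ιInv_twist, twist_contractLeft, twist_contractLeft]
  rfl

/-- For a top form `e`, the ideal of submaximal Pfaffians. -/
noncomputable def pfaffianIdeal (e : ExteriorAlgebra R M) : Ideal R :=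
  LinearMap.range (Dual.eval R M (pfaffianVector hB e))

theorem pfaffian_contractLeft_mem_pfaffianIdeal (d : Dual R M) :
    pfaffian hB (d ⌋ e) ∈ pfaffianIdeal hB e :=
  ⟨d, dual_pfaffianVector hB d⟩

theorem pfaffianIdeal_smul_le (r : R) (e : ExteriorAlgebra R M) :
    pfaffianIdeal hB (r • e) ≤ pfaffianIdeal hB e := by
  rintro _ ⟨d, rfl⟩
  rw [Dual.eval_apply, dual_pfaffianVector, map_smul, map_smul]
  exact Ideal.mul_mem_left _ _ (pfaffian_contractLeft_mem_pfaffianIdeal hB d)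

include he

theorem ι_mul_twist (m : M) : ι R m * twist hB e = -B m ⌋ twist hB e :=
  eq_neg_of_add_eq_zero_left <| by rw [← twist_ι_mul, he, map_zero]

theorem apply_pfaffianVector : B (pfaffianVector hB e) = 0 := by
  ext m
  rw [← hB.neg_eq, pfaffianVector, ← algebraMapInv_contractLeft]
  have := congrArg algebraMapInv (ι_mul_twist hB he m)
  simpa [algebraMapInv_ι_mul] using this

theorem pfaffianMul_apply (a : Dual R M) (m : M) :
    pfaffianMul hB e a (B m) = a (pfaffianVector hB e) • m - a m • pfaffianVector hB e := by
  have h := congrArg (fun w => ιInv (a ⌋ w)) (ι_mul_twist hB he m)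
  simp only [contractLeft_ι_mul, map_sub, map_smul, map_neg, ιInv_ι_mul,
    algebraMapInv_contractLeft] at h
  change ιInv (a ⌋ B m ⌋ twist hB e) = _
  rw [← neg_eq_iff_eq_neg.2 h, neg_sub, pfaffianVector]

theorem apply_pfaffianMul (a b : Dual R M) :
    B (pfaffianMul hB e a b) = a (pfaffianVector hB e) • b - b (pfaffianVector hB e) • a := by
  ext m
  have hcomm : B m ⌋ a ⌋ b ⌋ twist hB e = a ⌋ b ⌋ B m ⌋ twist hB e := by
    rw [contractLeft_comm, contractLeft_comm (B m), map_neg, neg_neg]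
  rw [← hB.neg_eq]
  change -B m (ιInv (a ⌋ b ⌋ twist hB e)) = _
  rw [← algebraMapInv_contractLeft, hcomm, ← neg_eq_iff_eq_neg.2 (ι_mul_twist hB he m)]
  simp [contractLeft_ι_mul, algebraMapInv_contractLeft, algebraMapInv_ι_mul, pfaffianVector,
    mul_comm]

end TopForm

end Pfaffian

section PfaffianResolution

open ExteriorAlgebra

variable {R M : Type*} [CommRing R] [AddCommGroup M] [Module R M]

variable {B : LinearMap.BilinForm R M}
variable (hB : B.IsAlt) {e : ExteriorAlgebra R M}

/-- The Buchsbaum-Eisenbud resolution `0 → R → M → M* → R` of the ideal of submaximal Pfaffians of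
`B`, where `e` is a top form of odd degree and the ideal of Pfaffians has grade three. -/
noncomputable def pfaffianResolution [Free R M] [Module.Finite R M] (he : ∀ m, ι R m * e = 0)
    {x : Fin 3 → R} (hx : KoszulExact x R)
    (hrad : Ideal.span (Set.range x) ≤ (pfaffianIdeal hB e).radical) :
    DGResolution R (Dual R M) M R :=
  have hpow := Ideal.exists_pow_le_of_le_radical_of_fg hrad (Submodule.fg_span (Set.finite_range x))
  have hinj : Function.Injective (LinearMap.toSpanSingleton R M (pfaffianVector hB e)) :=
    injective_of_pow_smul rfl hx fun c hc s hs => by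
      obtain ⟨a, rfl⟩ := hpow.choose_spec hc
      simpa [mul_comm] using congrArg a hs
  have hex : Function.Exact (LinearMap.toSpanSingleton R M (pfaffianVector hB e)) B :=
    exact_of_pow_smul_of_injective rfl hx hx.of_free
      (by ext; simp [apply_pfaffianVector hB he]) hinj fun c hc z hz => by
        obtain ⟨a, rfl⟩ := hpow.choose_spec hc
        have h := pfaffianMul_apply hB he a z
        rw [hz, map_zero] at h
        exact ⟨a z, (sub_eq_zero.1 h.symm).symm⟩
  { d₁ := Dual.eval R M (pfaffianVector hB e)
    d₂ := B
    d₃ := LinearMap.toSpanSingleton R M (pfaffianVector hB e)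
    mul₁₁ := pfaffianMul hB e
    exact_d₂_d₁ := exact_of_pow_smul_of_exact rfl hx hx.of_free hx.of_free
      (by
        ext m
        change B m (pfaffianVector hB e) = 0
        rw [← hB.neg_eq, apply_pfaffianVector hB he, LinearMap.zero_apply, neg_zero])
      hinj hex fun c hc b hb => by
        obtain ⟨a, rfl⟩ := hpow.choose_spec hc
        have h := apply_pfaffianMul hB he a b
        exact ⟨pfaffianMul hB e a b, by
          rw [h, ← Dual.eval_apply, ← Dual.eval_apply _ _ _ b, hb, zero_smul, sub_zero]⟩
    exact_d₃_d₂ := hex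
    d₃_injective := hinj
    d₂_mul₁₁ := apply_pfaffianMul hB he
    mul₁₁_self := pfaffianMul_self hB }

theorem pfaffianResolution_mul₁₂ [Free R M] [Module.Finite R M] (he : ∀ m, ι R m * e = 0)
    {x : Fin 3 → R} (hx : KoszulExact x R)
    (hrad : Ideal.span (Set.range x) ≤ (pfaffianIdeal hB e).radical) (a : Dual R M) (z : M) :
    (pfaffianResolution hB he hx hrad).mul₁₂ a z = a z :=
  DGResolution.mul₁₂_eq_of_d₃_eq _ <| by
    change a z • pfaffianVector hB e =
      a (pfaffianVector hB e) • z - pfaffianMul hB e a (B z)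
    rw [pfaffianMul_apply hB he, sub_sub_cancel]

end PfaffianResolution

section PfaffianDegree

open ExteriorAlgebra
open CliffordAlgebra (contractLeft)

variable {R M : Type*} [CommRing R] [AddCommGroup M] [Module R M] {I : Ideal R}

theorem contractLeft_mem_smul_exteriorPower {d : Dual R M} (hd : ∀ m, d m ∈ I) (n : ℕ) :
    ∀ w ∈ ⋀[R]^(n + 1) M, d ⌋ w ∈ I • ⋀[R]^n M := by
  induction n with
  | zero =>
    rintro w hw
    obtain ⟨m, rfl⟩ : w ∈ LinearMap.range (ι R) := by simpa using hw
    rw [CliffordAlgebra.contractLeft_ι, Algebra.algebraMap_eq_smul_one]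
    exact Submodule.smul_mem_smul (hd m) (by simp)
  | succ n ih =>
    rintro w hw
    rw [exteriorPower, pow_succ'] at hw
    induction hw using Submodule.mul_induction_on' with
    | add v _ w _ hv hw => rw [map_add]; exact add_mem hv hw
    | mem_mul_mem u hu w hw =>
      obtain ⟨m, rfl⟩ := hu
      rw [contractLeft_ι_mul]
      refine sub_mem (Submodule.smul_mem_smul (hd m) hw) ?_
      have h := Submodule.mem_map_of_mem (f := LinearMap.mulLeft R (ι R m)) (ih w hw)
      rw [Submodule.map_smul''] at h
      refine smul_mono_right I (Submodule.map_le_iff_le_comap.2 fun u hu => ?_) h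
      rw [exteriorPower, pow_succ']
      exact Submodule.mul_mem_mul (LinearMap.mem_range_self (ι R) m) hu

theorem contractLeft_mem_exteriorPower (d : Dual R M) {n : ℕ} {w : ExteriorAlgebra R M}
    (hw : w ∈ ⋀[R]^(n + 1) M) : d ⌋ w ∈ ⋀[R]^n M := by
  simpa using contractLeft_mem_smul_exteriorPower (I := ⊤) (d := d) (fun _ => trivial) n w hw

variable {B : LinearMap.BilinForm R M} (hB : B.IsAlt)

theorem pfaffian_mem_pow (hBI : ∀ m m', B m m' ∈ I) (n : ℕ) :
    ∀ w ∈ ⋀[R]^(2 * n) M, pfaffian hB w ∈ I ^ n := by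
  induction n with
  | zero => simp
  | succ n ih =>
    rintro w hw
    rw [exteriorPower, mul_add_one, pow_succ' _ (2 * n + 1)] at hw
    induction hw using Submodule.mul_induction_on' with
    | add v _ w _ hv hw => rw [map_add]; exact add_mem hv hw
    | mem_mul_mem u hu w hw =>
      obtain ⟨m, rfl⟩ := hu
      rw [pfaffian_ι_mul]
      have h := Submodule.mem_map_of_mem (f := pfaffian hB)
        (contractLeft_mem_smul_exteriorPower (hBI m) _ w hw)
      rw [Submodule.map_smul''] at h
      rw [pow_succ']
      exact smul_mono_right I (Submodule.map_le_iff_le_comap.2 ih) h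

variable [Free R M]

theorem mem_smul_top_of_forall_dual {v : M} (hv : ∀ d : Dual R M, d v ∈ I) :
    v ∈ I • (⊤ : Submodule R M) :=
  (mem_smul_top_iff_repr (Free.chooseBasis R M)).2 fun i => hv (Basis.coord _ i)

variable {e : ExteriorAlgebra R M}

theorem pfaffianVector_mem_pow_smul_top (hBI : ∀ m m', B m m' ∈ I) {n : ℕ}
    (he : e ∈ ⋀[R]^(2 * n + 1) M) : pfaffianVector hB e ∈ I ^ n • (⊤ : Submodule R M) :=
  mem_smul_top_of_forall_dual fun d => by
    rw [dual_pfaffianVector]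
    exact pfaffian_mem_pow hB hBI n _ (contractLeft_mem_exteriorPower d he)

theorem pfaffianMul_mem_pow_smul_top (hBI : ∀ m m', B m m' ∈ I) {n : ℕ}
    (he : e ∈ ⋀[R]^(2 * n + 3) M) (a b : Dual R M) :
    pfaffianMul hB e a b ∈ I ^ n • (⊤ : Submodule R M) :=
  mem_smul_top_of_forall_dual fun d => by
    rw [dual_pfaffianMul]
    exact pfaffian_mem_pow hB hBI n _ <| contractLeft_mem_exteriorPower d <|
      contractLeft_mem_exteriorPower a <| contractLeft_mem_exteriorPower b he

end PfaffianDegree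

section TopForm

open ExteriorAlgebra
open CliffordAlgebra (contractLeft)

variable {R M : Type*} [CommRing R] [AddCommGroup M] [Module R M]

/-- Up to sign, the exterior product of the vectors `v j` with `-n ≤ j ≤ n`. -/
noncomputable def topForm (v : ℤ → M) : ℕ → ExteriorAlgebra R M
  | 0 => ι R (v 0)
  | n + 1 => ι R (v (n + 1)) * (ι R (v (-(n + 1))) * topForm v n)

variable {v : ℤ → M}

theorem ι_mul_ι_mul_self (a : M) (w : ExteriorAlgebra R M) : ι R a * (ι R a * w) = 0 := by
  rw [← mul_assoc, ι_sq_zero, zero_mul]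

theorem ι_mul_ι_mul_comm (a b : M) (w : ExteriorAlgebra R M) :
    ι R a * (ι R b * w) = -(ι R b * (ι R a * w)) := by
  rw [← mul_assoc, ← mul_assoc, ← neg_mul, eq_neg_of_add_eq_zero_left (ι_add_mul_swap a b)]

theorem ι_mul_topForm {n : ℕ} {j : ℤ} (hj : j.natAbs ≤ n) : ι R (v j) * topForm v n = 0 := by
  induction n with
  | zero =>
    obtain rfl : j = 0 := by omega
    exact ι_sq_zero _
  | succ n ih =>
    rw [topForm]
    obtain h | rfl | rfl : j.natAbs ≤ n ∨ j = n + 1 ∨ j = -(n + 1) := by omega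
    · rw [ι_mul_ι_mul_comm, ι_mul_ι_mul_comm (v j) (v (-(n + 1))), ih h]
      simp
    · exact ι_mul_ι_mul_self _ _
    · rw [ι_mul_ι_mul_comm, ι_mul_ι_mul_self, mul_zero, neg_zero]

theorem topForm_mem_exteriorPower (n : ℕ) : topForm v n ∈ ⋀[R]^(2 * n + 1) M := by
  induction n with
  | zero => simp [topForm]
  | succ n ih =>
    rw [exteriorPower, topForm, mul_add_one, add_right_comm, pow_succ', pow_succ']
    exact Submodule.mul_mem_mul (LinearMap.mem_range_self _ _) <|
      Submodule.mul_mem_mul (LinearMap.mem_range_self _ _) ih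

theorem topForm_comp_neg (n : ℕ) :
    topForm (R := R) (fun j => v (-j)) n = (-1 : R) ^ n • topForm v n := by
  induction n with
  | zero => simp [topForm]
  | succ n ih =>
    rw [topForm, topForm, ih, ι_mul_ι_mul_comm, neg_neg]
    simp [pow_succ]

theorem contractLeft_topForm_mem {I : Ideal R} {d : Dual R M} {n : ℕ}
    (hd : ∀ j : ℤ, j.natAbs ≤ n → d (v j) ∈ I) :
    d ⌋ topForm v n ∈ I • (⊤ : Submodule R (ExteriorAlgebra R M)) := by
  induction n with
  | zero =>
    rw [topForm, CliffordAlgebra.contractLeft_ι, Algebra.algebraMap_eq_smul_one]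
    exact Submodule.smul_mem_smul (hd 0 le_rfl) trivial
  | succ n ih =>
    rw [topForm, contractLeft_ι_mul, contractLeft_ι_mul]
    refine sub_mem (Submodule.smul_mem_smul (hd _ (by omega)) trivial) <|
      map_mem_smul_top (LinearMap.mulLeft R _) <|
        sub_mem (Submodule.smul_mem_smul (hd _ (by omega)) trivial) <|
          map_mem_smul_top (LinearMap.mulLeft R _) <| ih fun j hj => hd j (by omega)

theorem contractLeft_topForm_eq_zero {d : Dual R M} {n : ℕ}
    (hd : ∀ j : ℤ, j.natAbs ≤ n → d (v j) = 0) : d ⌋ topForm v n = 0 := by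
  simpa using contractLeft_topForm_mem (I := ⊥) hd

variable {B : LinearMap.BilinForm R M} (hB : B.IsAlt)

theorem pfaffian_contractLeft_topForm_last
    (hv : ∀ (k : ℕ) (j : ℤ), -k ≤ j → j < k → B (v (-(k + 1))) (v j) = 0) (n : ℕ) (d : Dual R M)
    (hd : ∀ j : ℤ, -n ≤ j → j < n → d (v j) = 0) :
    pfaffian hB (d ⌋ topForm v n) = d (v n) * ∏ k ∈ Finset.range n, B (v (-(k + 1))) (v k) := by
  induction n generalizing d with
  | zero => simp [topForm, pfaffian, twist]
  | succ n ih =>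
    rw [topForm, contractLeft_ι_mul, contractLeft_ι_mul, hd (-(n + 1)) (by omega) (by omega),
      contractLeft_topForm_eq_zero fun j hj => hd j (by omega) (by omega)]
    simp only [zero_smul, mul_zero, sub_zero, map_smul, smul_eq_mul]
    rw [pfaffian_ι_mul, ih _ (hv n), Finset.prod_range_succ]
    push_cast
    ring

theorem pfaffian_contractLeft_topForm_middle {I : Ideal R}
    (hv : ∀ (k : ℕ) (j : ℤ), j.natAbs ≤ k → B (v (-(k + 1))) (v j) ∈ I) (n : ℕ) {d : Dual R M}
    (hd : ∀ j : ℤ, j ≠ 0 → d (v j) = 0) :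
    pfaffian hB (d ⌋ topForm v n) -
      d (v 0) * ∏ k ∈ Finset.range n, B (v (k + 1)) (v (-(k + 1))) ∈ I := by
  induction n with
  | zero => simp [topForm, pfaffian, twist]
  | succ n ih =>
    have hI : pfaffian hB (B (v (-(n + 1))) ⌋ B (v (n + 1)) ⌋ d ⌋ topForm v n) ∈ I := by
      rw [contractLeft_comm, contractLeft_comm _ d]
      simpa using map_mem_smul_top (pfaffian hB ∘ₗ contractLeft (B (v (n + 1))) ∘ₗ contractLeft d)
        (contractLeft_topForm_mem (hv n))
    rw [topForm, contractLeft_ι_mul, contractLeft_ι_mul, hd _ (by omega), hd _ (by omega)]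
    simp only [zero_smul, zero_sub, mul_neg, neg_neg]
    rw [pfaffian_ι_mul, contractLeft_ι_mul, map_sub, map_smul, pfaffian_ι_mul,
      Finset.prod_range_succ]
    convert sub_mem (I.mul_mem_left (B (v (n + 1)) (v (-(n + 1)))) ih) hI using 1
    simp only [smul_eq_mul]
    ring

end TopForm

/-! ### Trimming -/

section ConeClassG

variable {R F₁ F₂ F₃ K₁ K₂ K₃ : Type*} [CommRing R] [AddCommGroup F₁] [AddCommGroup F₂]
  [AddCommGroup F₃] [AddCommGroup K₁] [AddCommGroup K₂] [AddCommGroup K₃] [Module R F₁]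
  [Module R F₂] [Module R F₃] [Module R K₁] [Module R K₂] [Module R K₃]

theorem prod_mem_smul_top {I : Ideal R} {v : F₁ × F₂} :
    v ∈ I • (⊤ : Submodule R (F₁ × F₂)) ↔
      v.1 ∈ I • (⊤ : Submodule R F₁) ∧ v.2 ∈ I • (⊤ : Submodule R F₂) := by
  refine ⟨fun h => ⟨map_mem_smul_top (.fst R F₁ F₂) h, map_mem_smul_top (.snd R F₁ F₂) h⟩,
    fun ⟨h₁, h₂⟩ => ?_⟩
  simpa using add_mem (map_mem_smul_top (.inl R F₁ F₂) h₁) (map_mem_smul_top (.inr R F₁ F₂) h₂)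

theorem map_mem_sq_smul_top {I : Ideal R} {f : F₁ →ₗ[R] F₂}
    (hf : ∀ v, f v ∈ I • (⊤ : Submodule R F₂)) {v : F₁} (hv : v ∈ I • (⊤ : Submodule R F₁)) :
    f v ∈ I ^ 2 • (⊤ : Submodule R F₂) := by
  refine Submodule.smul_induction_on hv (fun c hc v _ => ?_) fun v w hv hw => ?_
  · rw [map_smul, sq, mul_smul]
    exact Submodule.smul_mem_smul hc (hf v)
  · rw [map_add]
    exact add_mem hv hw

namespace ConeData

variable {D : DGResolution R F₁ F₂ F₃} {C : ConeData D K₁ K₂ K₃} {I : Ideal R}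

theorem W_mem (hd₁ : ∀ a, D.d₁ a ∈ I ^ 2)
    (hmul : ∀ a b, D.mul₁₁ a b ∈ I ^ 2 • (⊤ : Submodule R F₂))
    (hκ₂ : ∀ w, C.κ₂ w ∈ I ^ 2 • (⊤ : Submodule R K₁) → w ∈ I • (⊤ : Submodule R K₂))
    (a b : K₁) : C.W a b ∈ I • (⊤ : Submodule R K₂) := by
  refine hκ₂ _ ?_
  rw [C.κ₂_W]
  exact sub_mem (sub_mem (Submodule.smul_mem_smul (hd₁ _) trivial)
    (Submodule.smul_mem_smul (hd₁ _) trivial)) (map_mem_smul_top _ (hmul _ _))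

theorem cone_mul₁₂_snd_mem (hd₁ : ∀ a, D.d₁ a ∈ I ^ 2)
    (hW : ∀ a b, C.W a b ∈ I • (⊤ : Submodule R K₂))
    (hη : ∀ v, C.η v ∈ I ^ 2 • (⊤ : Submodule R K₂))
    (hκ₃ : ∀ u, C.κ₃ u ∈ I ^ 2 • (⊤ : Submodule R K₂) → u ∈ I • (⊤ : Submodule R K₃))
    (a : K₁) {z : F₂ × K₂} (hz : C.cone.d₂ z ∈ I • (⊤ : Submodule R K₁)) :
    (C.cone.mul₁₂ a z).2 ∈ I • (⊤ : Submodule R K₃) := by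
  have h : C.η (C.cone.mul₁₂ a z).1 + C.κ₃ (C.cone.mul₁₂ a z).2 =
      D.d₁ (C.α a) • z.2 - C.W a (C.cone.d₂ z) :=
    congrArg Prod.snd (C.cone.d₃_mul₁₂ a z)
  refine hκ₃ _ ?_
  rw [eq_sub_of_add_eq' h]
  exact sub_mem (sub_mem (Submodule.smul_mem_smul (hd₁ _) trivial)
    (map_mem_sq_smul_top (hW a) hz)) (hη _)

theorem cone_isClassG {G₁ G₂ P : Type*} {e₁ : G₁ → K₁} {e₂ : G₂ → F₂ × K₂} {e : F₃} {p₁ : P → G₁}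
    {p₂ : P → G₂} (hd₁ : ∀ a, D.d₁ a ∈ I ^ 2)
    (hmul : ∀ a b, D.mul₁₁ a b ∈ I ^ 2 • (⊤ : Submodule R F₂))
    (hd₃ : ∀ v, D.d₃ v ∈ I • (⊤ : Submodule R F₂))
    (hη : ∀ v, C.η v ∈ I ^ 2 • (⊤ : Submodule R K₂))
    (hκ₂ : ∀ w, C.κ₂ w ∈ I ^ 2 • (⊤ : Submodule R K₁) → w ∈ I • (⊤ : Submodule R K₂))
    (hκ₃ : ∀ u, C.κ₃ u ∈ I • (⊤ : Submodule R K₂))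
    (hκ₃' : ∀ u, C.κ₃ u ∈ I ^ 2 • (⊤ : Submodule R K₂) → u ∈ I • (⊤ : Submodule R K₃))
    (hd₂ : ∀ g, C.cone.d₂ (e₂ g) ∈ I • (⊤ : Submodule R K₁))
    (hpaired : ∀ i, D.mul₁₂ (C.α (e₁ (p₁ i))) (e₂ (p₂ i)).1 - e ∈ I • (⊤ : Submodule R F₃))
    (hmem : ∀ g h, (∀ i, g = p₁ i → h ≠ p₂ i) →
      D.mul₁₂ (C.α (e₁ g)) (e₂ h).1 ∈ I • (⊤ : Submodule R F₃)) :
    C.cone.IsClassG I e₁ e₂ (e, 0) p₁ p₂ := by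
  have hle : I ^ 2 ≤ I := Ideal.pow_le_self two_ne_zero
  have hW := W_mem hd₁ hmul hκ₂
  have hsnd (a : K₁) (g : G₂) := cone_mul₁₂_snd_mem hd₁ hW hη hκ₃' a (hd₂ g)
  refine ⟨fun a => hle (hd₁ _), hd₂,
    fun v => prod_mem_smul_top.2 ⟨hd₃ _, add_mem (Submodule.smul_mono_left hle (hη _)) (hκ₃ _)⟩,
    fun a b => prod_mem_smul_top.2 ⟨Submodule.smul_mono_left hle (hmul _ _), hW a b⟩,
    fun i => prod_mem_smul_top.2 ⟨?_, ?_⟩, fun g h hgh => prod_mem_smul_top.2 ⟨?_, hsnd _ _⟩⟩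
  · simpa [cone_mul₁₂_fst] using hpaired i
  · simpa using hsnd _ _
  · simpa [cone_mul₁₂_fst] using hmem g h hgh

end ConeData

end ConeClassG

section OfLift

variable {R F₁ F₂ K₁ K₂ K₃ : Type*} [CommRing R] [AddCommGroup F₁] [AddCommGroup F₂]
  [AddCommGroup K₁] [AddCommGroup K₂] [AddCommGroup K₃] [Module R F₁] [Module R F₂]
  [Module R K₁] [Module R K₂] [Module R K₃] {D : DGResolution R F₁ F₂ R} {α : K₁ →ₗ[R] F₁}
  {κ₂ : K₂ →ₗ[R] K₁} {κ₃ : K₃ →ₗ[R] K₂} {ψ : F₂ →ₗ[R] K₁}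

theorem exists_mul_lift [Free R K₁] (hψ : ∀ z, α (ψ z) = D.d₂ z) (hκα : Function.Exact κ₂ α) :
    ∃ W : K₁ →ₗ[R] K₁ →ₗ[R] K₂, (∀ a, W a a = 0) ∧
      ∀ a b, κ₂ (W a b) = D.d₁ (α a) • b - D.d₁ (α b) • a - ψ (D.mul₁₁ (α a) (α b)) := by
  let c : K₁ →ₗ[R] K₁ →ₗ[R] K₁ :=
    LinearMap.lsmul R K₁ ∘ₗ D.d₁ ∘ₗ α - (LinearMap.lsmul R K₁ ∘ₗ D.d₁ ∘ₗ α).flip -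
      (D.mul₁₁.compl₁₂ α α).compr₂ ψ
  obtain ⟨W, hself, hW⟩ := exists_alternating_lift κ₂ c (fun a => by simp [c, D.mul₁₁_self])
    fun a b => (hκα _).1 (by simp [c, hψ, D.d₂_mul₁₁])
  exact ⟨W, hself, fun a b => by simp [hW, c]⟩

/-- The mapping cone data of a lift `ψ` of `d₂`, when some product `α a₀ * z₀` is the generator
of `F₃ = R`. -/
noncomputable def ConeData.ofLift [Free R K₁] (hψ : ∀ z, α (ψ z) = D.d₂ z)
    (hκα : Function.Exact κ₂ α) (hκκ : Function.Exact κ₃ κ₂) (hκ₃ : Function.Injective κ₃)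
    {a₀ : K₁} {z₀ : F₂} (h₀ : D.mul₁₂ (α a₀) z₀ = 1) : ConeData D K₁ K₂ K₃ where
  α := α
  κ₂ := κ₂
  κ₃ := κ₃
  ψ := ψ
  W := (exists_mul_lift hψ hκα).choose
  -- As `d₃ 1 = d₃ (α a₀ * z₀)`, the lift `W` of the product provides the preimage of `-ψ (d₃ 1)`.
  η := -LinearMap.toSpanSingleton R K₂ ((exists_mul_lift hψ hκα).choose a₀ (ψ z₀))
  α_ψ := hψ
  exact_κ₂_α := hκα
  exact_κ₃_κ₂ := hκκ
  κ₃_injective := hκ₃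
  ψ_d₃_add v := by
    have h := (exists_mul_lift hψ hκα).choose_spec.2 a₀ (ψ z₀)
    have h₁ := D.d₃_mul₁₂ (α a₀) z₀
    have hv : D.d₃ v = v • D.d₃ 1 := by rw [← map_smul, smul_eq_mul, mul_one]
    rw [h₀] at h₁
    rw [hψ, D.exact_d₂_d₁.apply_apply_eq_zero, zero_smul, sub_zero, ← map_smul, ← map_sub,
      ← h₁] at h
    simp [h, hv]
  W_self := (exists_mul_lift hψ hκα).choose_spec.1
  κ₂_W := (exists_mul_lift hψ hκα).choose_spec.2

theorem ConeData.ofLift_η_mem [Free R K₁] {hψ : ∀ z, α (ψ z) = D.d₂ z}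
    {hκα : Function.Exact κ₂ α} {hκκ : Function.Exact κ₃ κ₂} {hκ₃ : Function.Injective κ₃}
    {a₀ : K₁} {z₀ : F₂} {h₀ : D.mul₁₂ (α a₀) z₀ = 1} {I : Ideal R}
    (hW : ∀ a b, (ofLift hψ hκα hκκ hκ₃ h₀).W a b ∈ I • (⊤ : Submodule R K₂))
    (hz₀ : ψ z₀ ∈ I • (⊤ : Submodule R K₁)) (v : R) :
    (ofLift hψ hκα hκκ hκ₃ h₀).η v ∈ I ^ 2 • (⊤ : Submodule R K₂) :=
  neg_mem (Submodule.smul_mem _ v (map_mem_sq_smul_top (hW a₀) hz₀))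

end OfLift

section Trim

variable {R F₁ F₂ U V : Type*} [CommRing R] [AddCommGroup F₁] [AddCommGroup F₂] [AddCommGroup U]
  [AddCommGroup V] [Module R F₁] [Module R F₂] [Module R U] [Module R V]

variable (V) in
/-- The Koszul differential `V³ → V`. -/
def koszul₁ (x : Fin 3 → R) : (Fin 3 → V) →ₗ[R] V :=
  ∑ s, x s • LinearMap.proj s

variable (V) in
/-- The Koszul differential `V³ → V³`. -/
def koszul₂ (x : Fin 3 → R) : (Fin 3 → V) →ₗ[R] (Fin 3 → V) :=
  LinearMap.pi fun s => x (s + 1) • LinearMap.proj (s + 2) - x (s + 2) • LinearMap.proj (s + 1)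

variable (V) in
/-- The Koszul differential `V → V³`. -/
def koszul₃ (x : Fin 3 → R) : V →ₗ[R] (Fin 3 → V) :=
  LinearMap.pi fun s => x s • LinearMap.id

variable {x : Fin 3 → R}

theorem koszul₁_apply (g : Fin 3 → V) : koszul₁ V x g = ∑ s, x s • g s := by
  simp [koszul₁]

theorem koszul₂_apply (w : Fin 3 → V) (s : Fin 3) :
    koszul₂ V x w s = x (s + 1) • w (s + 2) - x (s + 2) • w (s + 1) :=
  rfl

theorem koszul₃_apply (v : V) (s : Fin 3) : koszul₃ V x v s = x s • v :=
  rfl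

theorem KoszulExact.exact_koszul₂_koszul₁ (hx : KoszulExact x V) :
    Function.Exact (koszul₂ V x) (koszul₁ V x) := fun g => by
  refine ⟨fun h => ?_, ?_⟩
  · obtain ⟨w, hw⟩ := hx.exists_cross g (by rwa [← koszul₁_apply])
    exact ⟨w, funext fun s => (hw s).symm⟩
  · rintro ⟨w, rfl⟩
    simp only [koszul₁_apply, koszul₂_apply, Fin.sum_univ_three, Fin.isValue, zero_add,
      Fin.reduceAdd]
    module

theorem KoszulExact.exact_koszul₃_koszul₂ (hx : KoszulExact x V) :
    Function.Exact (koszul₃ V x) (koszul₂ V x) := fun w => by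
  refine ⟨fun h => ?_, ?_⟩
  · obtain ⟨v, hv⟩ := hx.exists_smul w fun s => sub_eq_zero.1 (congrFun h s)
    exact ⟨v, funext fun s => (hv s).symm⟩
  · rintro ⟨v, rfl⟩
    ext s
    simp only [koszul₂_apply, koszul₃_apply, Pi.zero_apply]
    module

theorem KoszulExact.koszul₃_injective (hx : KoszulExact x V) :
    Function.Injective (koszul₃ V x) :=
  (injective_iff_map_eq_zero _).2 fun v h => hx.eq_zero v (congrFun h)

theorem pi_mem_smul_top {ι : Type*} [Finite ι] {I : Ideal R} {v : ι → V} :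
    v ∈ I • (⊤ : Submodule R (ι → V)) ↔ ∀ s, v s ∈ I • (⊤ : Submodule R V) := by
  classical
  have := Fintype.ofFinite ι
  refine ⟨fun h s => map_mem_smul_top (.proj s) h, fun h => ?_⟩
  rw [← Finset.univ_sum_single v]
  exact sum_mem fun s _ => map_mem_smul_top (LinearMap.single R (fun _ => V) s) (h s)

theorem koszul₃_mem {I : Ideal R} (hxI : ∀ s, x s ∈ I) (v : V) :
    koszul₃ V x v ∈ I • (⊤ : Submodule R (Fin 3 → V)) :=
  pi_mem_smul_top.2 fun s => Submodule.smul_mem_smul (hxI s) trivial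

theorem koszul₁_mem {I : Ideal R} (hxI : ∀ s, x s ∈ I) (g : Fin 3 → V) :
    koszul₁ V x g ∈ I • (⊤ : Submodule R V) := by
  rw [koszul₁_apply]
  exact sum_mem fun s _ => Submodule.smul_mem_smul (hxI s) trivial

theorem koszul₂_mem {I : Ideal R} (hxI : ∀ s, x s ∈ I) (w : Fin 3 → V) :
    koszul₂ V x w ∈ I • (⊤ : Submodule R (Fin 3 → V)) :=
  pi_mem_smul_top.2 fun _ => sub_mem (Submodule.smul_mem_smul (hxI _) trivial)
    (Submodule.smul_mem_smul (hxI _) trivial)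

theorem mem_of_koszul₃_mem_sq [Free R V] {I : Ideal R} (hI : Ideal.span (Set.range x) = I)
    (hx : KoszulExact x R) {v : V} (hv : koszul₃ V x v ∈ I ^ 2 • (⊤ : Submodule R (Fin 3 → V))) :
    v ∈ I • (⊤ : Submodule R V) :=
  (mem_smul_top_iff_repr (Free.chooseBasis R V)).2 fun i => mem_of_mul_mem_sq hI hx (s := 0) <| by
    simpa [koszul₃_apply] using
      (mem_smul_top_iff_repr (Free.chooseBasis R V)).1 (pi_mem_smul_top.1 hv 0) i

theorem mem_of_koszul₂_mem_sq [Free R V] {I : Ideal R} (hI : Ideal.span (Set.range x) = I)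
    (hx : KoszulExact x R) {w : Fin 3 → V}
    (hw : koszul₂ V x w ∈ I ^ 2 • (⊤ : Submodule R (Fin 3 → V))) :
    w ∈ I • (⊤ : Submodule R (Fin 3 → V)) :=
  pi_mem_smul_top.2 fun s => (mem_smul_top_iff_repr (Free.chooseBasis R V)).2 fun i =>
    mem_of_cross_mem_sq hI hx (w := fun s => (Free.chooseBasis R V).repr (w s) i) (fun s => by
      simpa [koszul₂_apply] using
        (mem_smul_top_iff_repr (Free.chooseBasis R V)).1 (pi_mem_smul_top.1 hw s) i) s

variable (x) in
/-- For `F₁ ≃ U × V`, the map onto the submodule corresponding to `U × I V`, where `I` is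
generated by `x`. -/
def trimMap (β : F₁ ≃ₗ[R] U × V) : U × (Fin 3 → V) →ₗ[R] F₁ :=
  β.symm ∘ₗ LinearMap.id.prodMap (koszul₁ V x)

theorem KoszulExact.exact_trimMap (hx : KoszulExact x V) (β : F₁ ≃ₗ[R] U × V) :
    Function.Exact (LinearMap.inr R U (Fin 3 → V) ∘ₗ koszul₂ V x) (trimMap x β) := by
  rintro ⟨u, g⟩
  have h : trimMap x β (u, g) = 0 ↔ u = 0 ∧ koszul₁ V x g = 0 := by simp [trimMap]
  rw [h, hx.exact_koszul₂_koszul₁ g]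
  simp [Prod.ext_iff, eq_comm]

theorem KoszulExact.exact_koszul₃_inr_koszul₂ (hx : KoszulExact x V) :
    Function.Exact (koszul₃ V x) (LinearMap.inr R U (Fin 3 → V) ∘ₗ koszul₂ V x) :=
  (LinearMap.inr_injective (R := R)).comp_exact_iff_exact.2 hx.exact_koszul₃_koszul₂

/-- If the component of `d₂` in `V` factors through `koszul₁`, this is the resulting lift of `d₂`
along `trimMap`. -/
def trimLift (D : DGResolution R F₁ F₂ R) (β : F₁ ≃ₗ[R] U × V) (q : Fin 3 → F₂ →ₗ[R] V) :
    F₂ →ₗ[R] U × (Fin 3 → V) :=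
  (LinearMap.fst R U V ∘ₗ β ∘ₗ D.d₂).prod (LinearMap.pi q)

theorem trimMap_trimLift {D : DGResolution R F₁ F₂ R} {β : F₁ ≃ₗ[R] U × V}
    {q : Fin 3 → F₂ →ₗ[R] V} (hq : ∀ z, (β (D.d₂ z)).2 = ∑ s, x s • q s z) (z : F₂) :
    trimMap x β (trimLift D β q z) = D.d₂ z := by
  apply β.injective
  ext <;> simp [trimMap, trimLift, koszul₁_apply, hq]

end Trim

section TrimClassG

variable {R F₁ F₂ U V G₁ G₂ P : Type*} [CommRing R] [AddCommGroup F₁] [AddCommGroup F₂]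
  [AddCommGroup U] [AddCommGroup V] [Module R F₁] [Module R F₂] [Module R U] [Module R V]
  {D : DGResolution R F₁ F₂ R} {β : F₁ ≃ₗ[R] U × V} {q : Fin 3 → F₂ →ₗ[R] V} {x : Fin 3 → R}
  {I : Ideal R} {e₁ : G₁ → U × (Fin 3 → V)} {e₂ : G₂ → F₂ × (Fin 3 → V)} {p₁ : P → G₁}
  {p₂ : P → G₂}

theorem exists_trim_isClassG [Free R U] [Free R V] [Module.Finite R V] [Nonempty P]
    (hI : Ideal.span (Set.range x) = I) (hx : KoszulExact x R)
    (hd₁ : ∀ a, D.d₁ a ∈ I ^ 2) (hmul : ∀ a b, D.mul₁₁ a b ∈ I ^ 2 • (⊤ : Submodule R F₂))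
    (hd₃ : ∀ v, D.d₃ v ∈ I • (⊤ : Submodule R F₂))
    (hq : ∀ z, (β (D.d₂ z)).2 = ∑ s, x s • q s z)
    (hlift : ∀ g, trimLift D β q (e₂ g).1 ∈ I • (⊤ : Submodule R (U × (Fin 3 → V))))
    (hpaired : ∀ i, D.mul₁₂ (trimMap x β (e₁ (p₁ i))) (e₂ (p₂ i)).1 = 1)
    (hmem : ∀ g h, (∀ i, g = p₁ i → h ≠ p₂ i) →
      D.mul₁₂ (trimMap x β (e₁ g)) (e₂ h).1 ∈ I) :
    ∃ C : ConeData D (U × (Fin 3 → V)) (Fin 3 → V) V,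
      C.ψ = trimLift D β q ∧ C.cone.IsClassG I e₁ e₂ (1, 0) p₁ p₂ := by
  have hxI (s : Fin 3) : x s ∈ I := hI ▸ Ideal.subset_span ⟨s, rfl⟩
  have hxV : KoszulExact x V := hx.of_free
  obtain ⟨i₀⟩ := ‹Nonempty P›
  let C := ConeData.ofLift (trimMap_trimLift hq) (hxV.exact_trimMap β)
    hxV.exact_koszul₃_inr_koszul₂ hxV.koszul₃_injective (hpaired i₀)
  have hκ₂ (w) (hw : C.κ₂ w ∈ I ^ 2 • (⊤ : Submodule R (U × (Fin 3 → V)))) :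
      w ∈ I • (⊤ : Submodule R (Fin 3 → V)) :=
    mem_of_koszul₂_mem_sq hI hx (prod_mem_smul_top.1 hw).2
  have hW := ConeData.W_mem (C := C) hd₁ hmul hκ₂
  refine ⟨C, rfl, ConeData.cone_isClassG hd₁ hmul hd₃ (ConeData.ofLift_η_mem hW (hlift _)) hκ₂
    (koszul₃_mem hxI) (fun _ => mem_of_koszul₃_mem_sq hI hx) (fun g => ?_) (fun i => ?_)
    fun g h hgh => ?_⟩
  · exact add_mem (hlift g)
      (map_mem_smul_top (LinearMap.inr R U (Fin 3 → V)) (koszul₂_mem hxI (e₂ g).2))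
  · exact sub_eq_zero.2 (hpaired i) ▸ zero_mem _
  · rw [smul_eq_mul, Ideal.mul_top]
    exact hmem g h hgh

end TrimClassG

section TrimBasis

variable {R M A T : Type*} [CommRing R] [AddCommGroup M] [Module R M]

/-- The coordinates on `M*` with respect to the basis dual to `b`. -/
noncomputable def dualSplit (b : Basis (A ⊕ T) R M) : Dual R M ≃ₗ[R] (A → R) × (T → R) :=
  (b.constr R).symm ≪≫ₗ LinearEquiv.sumArrowLequivProdArrow A T R R

theorem dualSplit_symm_apply (b : Basis (A ⊕ T) R M) (u : (A → R) × (T → R)) (j : A ⊕ T) :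
    (dualSplit b).symm u (b j) = Sum.elim u.1 u.2 j :=
  b.constr_basis R _ j

theorem dualSplit_apply_fst (b : Basis (A ⊕ T) R M) (a : Dual R M) (i : A) :
    (dualSplit b a).1 i = a (b (.inl i)) :=
  rfl

theorem dualSplit_apply_snd (b : Basis (A ⊕ T) R M) (a : Dual R M) (t : T) :
    (dualSplit b a).2 t = a (b (.inr t)) :=
  rfl

end TrimBasis

section TrimPairing

variable {R M A T : Type*} [CommRing R] [AddCommGroup M] [Module R M]
  {D : DGResolution R (Dual R M) M R} {b : Basis (A ⊕ T) R M}
  {q : Fin 3 → M →ₗ[R] Dual R M} {x : Fin 3 → R} {I : Ideal R}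

/-- The component in `V = Rᵀ` of the factorization `d₂ = ∑ s, x s • q s`. -/
noncomputable def trimFactor (b : Basis (A ⊕ T) R M) (q : Fin 3 → M →ₗ[R] Dual R M) (s : Fin 3) :
    M →ₗ[R] T → R :=
  LinearMap.snd R (A → R) (T → R) ∘ₗ dualSplit b ∘ₗ q s

theorem dualSplit_d₂_snd (hd₂ : D.d₂ = ∑ s, x s • q s) (z : M) :
    (dualSplit b (D.d₂ z)).2 = ∑ s, x s • trimFactor b q s z := by
  ext t
  simp [hd₂, trimFactor, dualSplit_apply_snd, Prod.snd_sum]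

variable [Finite T]

/-- The basis of `N × (Rᵀ)³` extending a basis of `N`. -/
noncomputable def prodBasis {N J : Type*} [AddCommGroup N] [Module R N] (b : Basis J R N)
    (T : Type*) [Finite T] : Basis (J ⊕ Σ _ : Fin 3, T) R (N × (Fin 3 → T → R)) :=
  b.prod (Pi.basis fun _ => Pi.basisFun R T)

theorem prodBasis_inl_fst (j : A ⊕ T) : (prodBasis b T (.inl j)).1 = b j :=
  Basis.prod_apply_inl_fst _ _ _

theorem prodBasis_inr_fst (p : Σ _ : Fin 3, T) : (prodBasis b T (.inr p)).1 = 0 :=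
  Basis.prod_apply_inr_fst _ _ _

variable [Finite A]

theorem trimMap_prodBasis_inl [DecidableEq (A ⊕ T)] (a : A) (j : A ⊕ T) :
    trimMap x (dualSplit b) (prodBasis (Pi.basisFun R A) T (.inl a)) (b j) =
      if j = .inl a then 1 else 0 := by
  classical
  rcases j with j | t <;>
    simp [trimMap, prodBasis, dualSplit_symm_apply, Basis.prod_apply, Pi.single_apply]

theorem trimMap_prodBasis_inr_mem (hxI : ∀ s, x s ∈ I) (p : Σ _ : Fin 3, T) (z : M) :
    trimMap x (dualSplit b) (prodBasis (Pi.basisFun R A) T (.inr p)) z ∈ I := by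
  have h := map_mem_smul_top
    (Dual.eval R M z ∘ₗ (dualSplit b).symm.toLinearMap ∘ₗ LinearMap.inr R _ _)
    (koszul₁_mem hxI (Pi.basis (fun _ => Pi.basisFun R T) p))
  rw [smul_eq_mul, Ideal.mul_top] at h
  simpa [trimMap, prodBasis, Basis.prod_apply] using h

theorem trimLift_mem (hd₂ : D.d₂ = ∑ s, x s • q s) (hxI : ∀ s, x s ∈ I) {z : M}
    (hq : ∀ s t, q s z (b (.inr t)) ∈ I) :
    trimLift D (dualSplit b) (trimFactor b q) z ∈
      I • (⊤ : Submodule R ((A → R) × (Fin 3 → T → R))) := by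
  simp only [prod_mem_smul_top, pi_mem_smul_top, smul_eq_mul, Ideal.mul_top]
  refine ⟨fun i => ?_, hq⟩
  have h : (trimLift D (dualSplit b) (trimFactor b q) z).1 i =
      ∑ s, x s * q s z (b (.inl i)) := by
    simp [trimLift, hd₂, dualSplit_apply_fst, Prod.fst_sum]
  exact h ▸ sum_mem fun s _ => I.mul_mem_right _ (hxI s)

variable {C : Type*}

theorem exists_trim_isClassG_of_mul₁₂_apply {col : C → A ⊕ T} {row : C → Σ _ : Fin 3, T}
    [Nonempty {a : A // .inl a ∉ Set.range col}]
    (hI : Ideal.span (Set.range x) = I) (hx : KoszulExact x R)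
    (hd₁ : ∀ a, D.d₁ a ∈ I ^ 2) (hmul : ∀ a b, D.mul₁₁ a b ∈ I ^ 2 • (⊤ : Submodule R M))
    (hd₃ : ∀ v, D.d₃ v ∈ I • (⊤ : Submodule R M)) (hd₂ : D.d₂ = ∑ s, x s • q s)
    (hmul₁₂ : ∀ a z, D.mul₁₂ a z = a z)
    (hq : ∀ j ∉ Set.range col, ∀ s t, q s (b j) (b (.inr t)) ∈ I) :
    ∃ X : ConeData D ((A → R) × (Fin 3 → T → R)) (Fin 3 → T → R) (T → R),
      X.ψ = trimLift D (dualSplit b) (trimFactor b q) ∧ X.cone.IsClassG I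
        (fun g : {g : A ⊕ Σ _ : Fin 3, T // g ∉ Set.range fun t => Sum.inr (row t)} =>
          prodBasis (Pi.basisFun R A) T g)
        (fun g : {g : (A ⊕ T) ⊕ Σ _ : Fin 3, T // g ∉ Set.range fun t => Sum.inl (col t)} =>
          prodBasis b T g)
        (1, 0)
        (fun a : {a : A // .inl a ∉ Set.range col} => ⟨.inl a.1, by simp⟩)
        (fun a : {a : A // .inl a ∉ Set.range col} => ⟨.inl (.inl a.1), by simpa using a.2⟩) := by
  classical
  have hxI (s : Fin 3) : x s ∈ I := hI ▸ Ideal.subset_span ⟨s, rfl⟩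
  refine exists_trim_isClassG hI hx hd₁ hmul hd₃ (dualSplit_d₂_snd hd₂) ?_ (fun a => ?_) ?_
  · rintro ⟨j | p, hj⟩
    · rw [prodBasis_inl_fst]
      exact trimLift_mem hd₂ hxI (hq j fun ⟨t, ht⟩ => hj ⟨t, congrArg Sum.inl ht⟩)
    · rw [prodBasis_inr_fst, map_zero]
      exact zero_mem _
  · rw [hmul₁₂, prodBasis_inl_fst, trimMap_prodBasis_inl, if_pos rfl]
  · rintro ⟨a | p, hg⟩ ⟨j | p', hj⟩ hgh <;> rw [hmul₁₂]
    · have hja : j ≠ .inl a := by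
        rintro rfl
        exact hgh ⟨a, fun ⟨t, ht⟩ => hj ⟨t, congrArg Sum.inl ht⟩⟩ rfl rfl
      rw [prodBasis_inl_fst, trimMap_prodBasis_inl, if_neg hja]
      exact I.zero_mem
    · rw [prodBasis_inr_fst, map_zero]
      exact I.zero_mem
    · exact trimMap_prodBasis_inr_mem hxI p _
    · rw [prodBasis_inr_fst, map_zero]
      exact I.zero_mem

end TrimPairing

section TrimRanks

theorem card_notMem_range {G C : Type*} [Fintype G] [Fintype C] {f : C → G}
    (hf : Function.Injective f) [Fintype {g // g ∉ Set.range f}] :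
    Fintype.card {g // g ∉ Set.range f} = Fintype.card G - Fintype.card C := by
  classical
  rw [Fintype.card_subtype_compl, ← Set.card_range_of_injective hf]

theorem prodBasis_repr_inr {R N J T : Type*} [CommRing R] [AddCommGroup N] [Module R N] [Finite T]
    (b : Basis J R N) (v : N × (Fin 3 → T → R))
    (p : Σ _ : Fin 3, T) :
    (prodBasis b T).repr v (.inr p) = v.2 p.1 p.2 := by
  simp [prodBasis]

variable {R : Type} {M A T C : Type*} [CommRing R] [IsLocalRing R] [AddCommGroup M] [Module R M]
  [Fintype A] [Fintype T] [Fintype C] [DecidableEq C]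
  {D : DGResolution R (Dual R M) M R} {b : Basis (A ⊕ T) R M}
  {q : Fin 3 → M →ₗ[R] Dual R M} {x : Fin 3 → R} {col : C → A ⊕ T} {row : C → Σ _ : Fin 3, T}
  {ε : C → Rˣ}

theorem exists_hasTorClassGWithRanks_of_trim [Fintype {a : A // .inl a ∉ Set.range col}]
    [Nonempty {a : A // .inl a ∉ Set.range col}]
    (hI : Ideal.span (Set.range x) = maximalIdeal R) (hx : KoszulExact x R)
    (hd₁ : ∀ a, D.d₁ a ∈ maximalIdeal R ^ 2)
    (hmul : ∀ a b, D.mul₁₁ a b ∈ maximalIdeal R ^ 2 • (⊤ : Submodule R M))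
    (hd₃ : ∀ v, D.d₃ v ∈ maximalIdeal R • (⊤ : Submodule R M)) (hd₂ : D.d₂ = ∑ s, x s • q s)
    (hmul₁₂ : ∀ a z, D.mul₁₂ a z = a z)
    (hq : ∀ j ∉ Set.range col, ∀ s t, q s (b j) (b (.inr t)) ∈ maximalIdeal R)
    (hrow : Function.Injective row)
    (hunit : ∀ t t', q (row t').1 (b (col t)) (b (.inr (row t').2)) =
      if t' = t then (ε t : R) else 0) :
    ∃ J : Ideal R, HasTorClassGWithRanks R J
      (Fintype.card A + 3 * Fintype.card T - Fintype.card C) (Fintype.card T + 1)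
      (Fintype.card {a : A // .inl a ∉ Set.range col}) := by
  classical
  obtain ⟨X, hψ, hX⟩ := exists_trim_isClassG_of_mul₁₂_apply (row := row) hI hx hd₁ hmul hd₃ hd₂
    hmul₁₂ hq
  have hrow' : Function.Injective fun t => (Sum.inr (row t) : A ⊕ Σ _ : Fin 3, T) :=
    Sum.inr_injective.comp hrow
  obtain ⟨S, b₁, b₂, hS⟩ := hX.exists_restrict hrow' (ε := ε) fun t t' => by
    rw [prodBasis_repr_inr, ← hunit t t']
    simp [ConeData.cone, hψ, trimLift, trimFactor, prodBasis, dualSplit_apply_snd, Basis.prod_apply]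
  let b₃ : Basis (Unit ⊕ T) R (R × (T → R)) := (Basis.singleton Unit R).prod (Pi.basisFun R T)
  have hb₃ : b₃ (.inl ()) = (1, 0) := by simp [b₃, Basis.prod_apply]
  rw [← hb₃] at hS
  have key := hS.hasTorClassGWithRanks (fun a a' h => by simpa [Subtype.ext_iff] using h)
    (fun a a' h => by simpa [Subtype.ext_iff] using h)
  refine ⟨LinearMap.range (X.cone.restrict S).d₁, ?_⟩
  convert key using 1
  · rw [card_notMem_range hrow']
    simp [mul_comm]
  · simp [add_comm]

end TrimRanks

/-! ### The form supported on three antidiagonals -/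

section AntidiagonalForm

variable {R M ι : Type*} [CommRing R] [AddCommGroup M] [Module R M] [Fintype ι] [DecidableEq ι]

/-- The alternating form pairing the basis vectors labelled `i < j` by `p` with `i + j = c`,
with value `1` if `j ≤ k` and `y` otherwise. -/
noncomputable def antidiagonalForm (b : Basis ι R M) (p : ι → ℤ) (c k : ℤ) (y : R) :
    LinearMap.BilinForm R M :=
  let β := Matrix.toBilin b
    (Matrix.of fun i j => if p i + p j = c ∧ p i < p j then if p j ≤ k then 1 else y else 0)
  β - β.flip

variable {b : Basis ι R M} {p : ι → ℤ} {c k : ℤ} {y : R}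

theorem antidiagonalForm_isAlt : (antidiagonalForm b p c k y).IsAlt := fun z => by
  simp [antidiagonalForm]

theorem antidiagonalForm_apply_basis (i j : ι) :
    antidiagonalForm b p c k y (b i) (b j) =
      if p i + p j = c then ((p j - p i).sign : R) * if max (p i) (p j) ≤ k then 1 else y
      else 0 := by
  have hβ (A : Matrix ι ι R) (i j : ι) : Matrix.toBilin b A (b i) (b j) = A i j := by
    rw [← LinearMap.BilinForm.toMatrix_apply b, LinearMap.BilinForm.toMatrix_toBilin]
  have hsub (β : LinearMap.BilinForm R M) (z w : M) : (β - β.flip) z w = β z w - β w z := rfl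
  simp only [antidiagonalForm, hsub, hβ, Matrix.of_apply, add_comm (p j)]
  by_cases hc : p i + p j = c
  · rcases lt_trichotomy (p i) (p j) with h | h | h
    · simp [hc, h, h.le, h.not_gt, Int.sign_eq_one_of_pos (sub_pos.2 h)]
    · simp [h]
    · simp [hc, h, h.le, h.not_gt, Int.sign_eq_neg_one_of_neg (sub_neg.2 h), neg_ite]
  · simp [hc]

end AntidiagonalForm

section LabelledVector

variable {R M ι : Type*} [CommRing R] [AddCommGroup M] [Module R M] {b : Basis ι R M} {p : ι → ℤ}

/-- The basis vector with the given label, and `0` where there is none. -/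
noncomputable def labelledVector (b : Basis ι R M) (p : ι → ℤ) : ℤ → M :=
  Function.extend p b 0

theorem labelledVector_apply (hp : Function.Injective p) (i : ι) :
    labelledVector b p (p i) = b i :=
  hp.extend_apply _ _ _

theorem labelledVector_eq_zero {j : ℤ} (hj : j ∉ Set.range p) : labelledVector b p j = 0 :=
  Function.extend_apply' _ _ _ hj

theorem coord_labelledVector (hp : Function.Injective p) (i : ι) (j : ℤ) :
    b.coord i (labelledVector b p j) = if j = p i then 1 else 0 := by
  classical
  by_cases hj : j ∈ Set.range p
  · obtain ⟨i', rfl⟩ := hj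
    simp [labelledVector_apply hp, Finsupp.single_apply, hp.eq_iff]
  · rw [labelledVector_eq_zero hj, map_zero, if_neg fun h => hj ⟨i, h.symm⟩]

end LabelledVector

section CrossForm

variable {R M ι : Type*} [CommRing R] [AddCommGroup M] [Module R M] [Fintype ι] [DecidableEq ι]

/-- The antidiagonal on which `crossCoeff b p e x s` is supported. -/
def crossSum : Fin 3 → ℤ :=
  ![-1, 1, 0]

/-- The coefficient of `x s` in `crossForm b p e x`. -/
noncomputable def crossCoeff (b : Basis ι R M) (p : ι → ℤ) (e : ℤ) (x : Fin 3 → R) (s : Fin 3) :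
    LinearMap.BilinForm R M :=
  antidiagonalForm b p (crossSum s) (![e, 1, 0] s) (x s)

/-- The alternating form whose Pfaffian resolution is trimmed. For `e ∈ {0, 1}` its coefficients
have unit entries only at labels between `-1 - e` and `1`. -/
noncomputable def crossForm (b : Basis ι R M) (p : ι → ℤ) (e : ℤ) (x : Fin 3 → R) :
    LinearMap.BilinForm R M :=
  ∑ s, x s • crossCoeff b p e x s

variable {b : Basis ι R M} {p : ι → ℤ} {e : ℤ} {x : Fin 3 → R}

theorem crossCoeff_isAlt (s : Fin 3) : (crossCoeff b p e x s).IsAlt :=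
  antidiagonalForm_isAlt

theorem crossForm_isAlt : (crossForm b p e x).IsAlt := fun z => by
  simp [crossForm, crossCoeff_isAlt _ _]

theorem crossCoeff_labelledVector_of_ne (hp : Function.Injective p) {s : Fin 3} {i j : ℤ}
    (h : i + j ≠ crossSum s) :
    crossCoeff b p e x s (labelledVector b p i) (labelledVector b p j) = 0 := by
  by_cases hi : i ∈ Set.range p
  · by_cases hj : j ∈ Set.range p
    · obtain ⟨i, rfl⟩ := hi
      obtain ⟨j, rfl⟩ := hj
      rw [labelledVector_apply hp, labelledVector_apply hp, crossCoeff,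
        antidiagonalForm_apply_basis, if_neg h]
    · simp [labelledVector_eq_zero hj]
  · simp [labelledVector_eq_zero hi]

theorem neg_one_le_crossSum_le_one : ∀ s, -1 ≤ crossSum s ∧ crossSum s ≤ 1 := by
  decide

theorem crossSum_injective : Function.Injective crossSum := by
  decide

theorem crossForm_labelledVector (hp : Function.Injective p) {s : Fin 3} {i j : ℤ}
    (h : i + j = crossSum s) :
    crossForm b p e x (labelledVector b p i) (labelledVector b p j) =
      x s * crossCoeff b p e x s (labelledVector b p i) (labelledVector b p j) := by
  simp only [crossForm, LinearMap.sum_apply, LinearMap.smul_apply, smul_eq_mul]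
  refine Finset.sum_eq_single s (fun t _ hts => ?_) (by simp)
  rw [crossCoeff_labelledVector_of_ne hp (h.trans_ne (crossSum_injective.ne hts.symm)), mul_zero]

theorem isUnit_sign_sub {i j : ℤ} (hij : i ≠ j) : IsUnit ((j - i).sign : R) :=
  (Int.isUnit_iff.2 (by grind [Int.sign_eq_one_iff_pos, Int.sign_eq_neg_one_iff_neg])).map
    (Int.castRingHom R)

theorem crossForm_labelledVector_dvd (hp : Function.Injective p) {s : Fin 3} {i j : ℤ}
    (hi : i ∈ Set.range p) (hj : j ∈ Set.range p) (hij : i ≠ j) (h : i + j = crossSum s) :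
    crossForm b p e x (labelledVector b p i) (labelledVector b p j) ∣ x s ^ 2 := by
  rw [crossForm_labelledVector hp h]
  obtain ⟨i, rfl⟩ := hi
  obtain ⟨j, rfl⟩ := hj
  rw [labelledVector_apply hp, labelledVector_apply hp, crossCoeff, antidiagonalForm_apply_basis,
    if_pos h, pow_two]
  refine mul_dvd_mul_left _ ((isUnit_sign_sub hij).mul_left_dvd.2 ?_)
  split_ifs
  exacts [one_dvd _, dvd_rfl]

theorem crossForm_labelledVector_eq_zero (hp : Function.Injective p) {i j : ℤ}
    (h : ∀ s, i + j ≠ crossSum s) :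
    crossForm b p e x (labelledVector b p i) (labelledVector b p j) = 0 := by
  simp [crossForm, crossCoeff_labelledVector_of_ne hp (h _)]

theorem crossForm_labelledVector_mem (hp : Function.Injective p) {i j : ℤ} (h : i + j < 0) :
    crossForm b p e x (labelledVector b p i) (labelledVector b p j) ∈ Ideal.span {x 0} := by
  by_cases hij : i + j = crossSum 0
  · rw [crossForm_labelledVector hp hij]
    exact Ideal.mul_mem_right _ _ (Ideal.mem_span_singleton_self _)
  · rw [crossForm_labelledVector_eq_zero hp fun s => ?_]
    · exact zero_mem _
    · fin_cases s
      exacts [hij, show i + j ≠ 1 by omega, show i + j ≠ 0 by omega]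

end CrossForm

section Radical

theorem mem_radical_of_prod_mem {R : Type*} [CommRing R] {J : Ideal R} {l : ℕ} {y : R} {f : ℕ → R}
    (hf : ∀ k < l, f k ∣ y ^ 2) (hJ : ∏ k ∈ Finset.range l, f k ∈ J) : y ∈ J.radical :=
  ⟨2 * l, J.mem_of_dvd (by
    rw [pow_mul, ← Finset.card_range l, ← Finset.prod_const, Finset.card_range]
    exact Finset.prod_dvd_prod_of_dvd _ _ fun k hk => hf k (Finset.mem_range.1 hk)) hJ⟩

variable {R M : Type*} [CommRing R] [AddCommGroup M] [Module R M] {B : LinearMap.BilinForm R M}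
  (hB : B.IsAlt) {l : ℕ} {v : ℤ → M} {d : Dual R M} {y : R}

theorem mem_radical_pfaffianIdeal_last
    (hd : ∀ j : ℤ, d (v j) = if j = l then 1 else 0)
    (hv : ∀ i j, i + j < -1 → B (v i) (v j) = 0)
    (hy : ∀ k : ℕ, k < l → B (v (-(k + 1))) (v k) ∣ y ^ 2) :
    y ∈ (pfaffianIdeal hB (topForm v l)).radical :=
  mem_radical_of_prod_mem hy <| by
    have h := pfaffian_contractLeft_topForm_last hB (fun k j _ _ => hv _ _ (by omega)) l d
      fun j _ hj => (hd j).trans (if_neg hj.ne)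
    rw [hd, if_pos rfl, one_mul] at h
    exact h ▸ pfaffian_contractLeft_mem_pfaffianIdeal hB d

theorem mem_radical_pfaffianIdeal_first
    (hd : ∀ j : ℤ, d (v j) = if j = -l then 1 else 0)
    (hv : ∀ i j, 1 < i + j → B (v i) (v j) = 0)
    (hy : ∀ k : ℕ, k < l → B (v (k + 1)) (v (-k)) ∣ y ^ 2) :
    y ∈ (pfaffianIdeal hB (topForm v l)).radical := by
  have h := mem_radical_pfaffianIdeal_last hB (v := fun j => v (-j)) (l := l) (y := y) (d := d)
    (fun j => by simp [hd]) (fun i j hij => hv _ _ (by omega)) (by simpa using hy)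
  rw [topForm_comp_neg] at h
  exact Ideal.radical_mono (pfaffianIdeal_smul_le hB _ _) h

theorem mem_radical_pfaffianIdeal_middle {I : Ideal R}
    (hI : I ≤ (pfaffianIdeal hB (topForm v l)).radical)
    (hd : ∀ j : ℤ, d (v j) = if j = 0 then 1 else 0)
    (hv : ∀ i j, i + j < 0 → B (v i) (v j) ∈ I)
    (hy : ∀ k : ℕ, k < l → B (v (k + 1)) (v (-(k + 1))) ∣ y ^ 2) :
    y ∈ (pfaffianIdeal hB (topForm v l)).radical := by
  rw [← Ideal.radical_idem]
  refine mem_radical_of_prod_mem hy ?_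
  have h := pfaffian_contractLeft_topForm_middle hB (fun k j _ => hv _ _ (by omega)) l
    fun j hj => (hd j).trans (if_neg hj)
  rw [hd, if_pos rfl, one_mul] at h
  exact (Submodule.sub_mem_iff_right _
    (Ideal.le_radical (pfaffian_contractLeft_mem_pfaffianIdeal hB d))).1 (hI h)

end Radical

section CrossRadical

variable {R M ι : Type*} [CommRing R] [AddCommGroup M] [Module R M] [Fintype ι] [DecidableEq ι]
  {b : Basis ι R M} {p : ι → ℤ} {e : ℤ} {x : Fin 3 → R} {l : ℕ}

theorem span_le_radical_pfaffianIdeal_crossForm (hp : Function.Injective p)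
    (hl : Set.range p = Set.Icc (-l : ℤ) l) :
    Ideal.span (Set.range x) ≤
      (pfaffianIdeal (crossForm_isAlt (b := b) (p := p) (e := e) (x := x))
        (topForm (labelledVector b p) l)).radical := by
  have hl' {j : ℤ} : j ∈ Set.range p ↔ -l ≤ j ∧ j ≤ l := by rw [hl, Set.mem_Icc]
  have coord (j : ℤ) (hj : -l ≤ j ∧ j ≤ l) :
      ∃ d : Dual R M, ∀ i, d (labelledVector b p i) = if i = j then 1 else 0 := by
    obtain ⟨i, rfl⟩ := hl'.2 hj
    exact ⟨b.coord i, coord_labelledVector hp i⟩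
  have hdvd (s : Fin 3) (i j : ℤ) (hi : -l ≤ i ∧ i ≤ l) (hj : -l ≤ j ∧ j ≤ l) (hij : i ≠ j)
      (h : i + j = crossSum s) :
      crossForm b p e x (labelledVector b p i) (labelledVector b p j) ∣ x s ^ 2 :=
    crossForm_labelledVector_dvd hp (hl'.2 hi) (hl'.2 hj) hij h
  set J := pfaffianIdeal (crossForm_isAlt (b := b) (p := p) (e := e) (x := x))
    (topForm (labelledVector b p) l)
  have h₀ : x 0 ∈ J.radical := by
    obtain ⟨d, hd⟩ := coord l (by omega)
    exact mem_radical_pfaffianIdeal_last _ hd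
      (fun i j h => crossForm_labelledVector_eq_zero hp fun s =>
        (h.trans_le (neg_one_le_crossSum_le_one s).1).ne)
      fun k hk => hdvd 0 _ _ (by omega) (by omega) (by omega) (by simp [crossSum])
  have h₁ : x 1 ∈ J.radical := by
    obtain ⟨d, hd⟩ := coord (-l) (by omega)
    exact mem_radical_pfaffianIdeal_first _ hd
      (fun i j h => crossForm_labelledVector_eq_zero hp fun s =>
        ((neg_one_le_crossSum_le_one s).2.trans_lt h).ne')
      fun k hk => hdvd 1 _ _ (by omega) (by omega) (by omega) (by simp [crossSum])
  have h₂ : x 2 ∈ J.radical := by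
    obtain ⟨d, hd⟩ := coord 0 (by omega)
    exact mem_radical_pfaffianIdeal_middle _ ((Ideal.span_singleton_le_iff_mem _).2 h₀) hd
      (fun i j h => crossForm_labelledVector_mem hp h)
      fun k hk => hdvd 2 _ _ (by omega) (by omega) (by omega) (by simp [crossSum])
  rw [Ideal.span_le]
  rintro _ ⟨s, rfl⟩
  fin_cases s
  exacts [h₀, h₁, h₂]

end CrossRadical

section LabelledTopForm

variable {R M ι : Type*} [CommRing R] [AddCommGroup M] [Module R M] {b : Basis ι R M} {p : ι → ℤ}
  {l : ℕ}

theorem ι_mul_topForm_labelledVector (hp : Function.Injective p)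
    (hl : Set.range p = Set.Icc (-l : ℤ) l) (m : M) :
    ExteriorAlgebra.ι R m * topForm (labelledVector b p) l = 0 := by
  suffices LinearMap.mulRight R (topForm (labelledVector b p) l) ∘ₗ ExteriorAlgebra.ι R = 0 from
    LinearMap.congr_fun this m
  refine b.ext fun i => ?_
  have hi : p i ∈ Set.Icc (-l : ℤ) l := hl ▸ Set.mem_range_self i
  have h := ι_mul_topForm (R := R) (v := labelledVector b p) (n := l) (j := p i) (by grind)
  rwa [labelledVector_apply hp] at h

end LabelledTopForm

section CrossCoeff

variable {R M ι : Type*} [CommRing R] [AddCommGroup M] [Module R M] [Fintype ι] [DecidableEq ι]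
  {b : Basis ι R M} {p : ι → ℤ} {e : ℤ} {x : Fin 3 → R} {I : Ideal R}

theorem crossCoeff_apply_basis_mem {s : Fin 3} (hxs : x s ∈ I) {i j : ι}
    (h : p i + p j = crossSum s → ![e, 1, 0] s < max (p i) (p j)) :
    crossCoeff b p e x s (b i) (b j) ∈ I := by
  rw [crossCoeff, antidiagonalForm_apply_basis]
  split_ifs with hs hk
  · exact absurd hk (h hs).not_ge
  · exact I.mul_mem_left _ hxs
  · exact I.zero_mem

theorem crossCoeff_apply_basis_mem_of_notMem {e : ℕ} (he : e ≤ 1) (hxI : ∀ s, x s ∈ I) {i : ι}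
    (hi : p i ∉ Finset.Icc (-1 - e : ℤ) 1) (s : Fin 3) (j : ι) :
    crossCoeff b p e x s (b i) (b j) ∈ I := by
  refine crossCoeff_apply_basis_mem (hxI s) fun h => ?_
  rw [Finset.mem_Icc] at hi
  fin_cases s <;> simp [crossSum] at h ⊢ <;> omega

/-- The index `s` of the coefficient whose unit entry cancels the column labelled `t`. -/
def unitCoeff (t : ℤ) : Fin 3 :=
  if t = 1 then 1 else 0

theorem crossSum_unitCoeff (t : ℤ) : crossSum (unitCoeff t) = if t = 1 then 1 else -1 := by
  by_cases h : t = 1 <;> simp [unitCoeff, crossSum, h]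

theorem crossCoeff_unitCoeff_apply_basis {e : ℕ} {i j : ι} {t : ℤ}
    (ht : t ∈ Finset.Icc (-1 - e : ℤ) 1) (hj : p j = crossSum (unitCoeff t) - t) :
    crossCoeff b p e x (unitCoeff t) (b i) (b j) =
      if t = p i then ((p j - t).sign : R) else 0 := by
  rw [Finset.mem_Icc] at ht
  have hsum : p i + p j = crossSum (unitCoeff t) ↔ t = p i := by omega
  rw [crossCoeff, antidiagonalForm_apply_basis]
  simp only [hsum]
  refine if_ctx_congr Iff.rfl (fun h => ?_) fun _ => rfl
  rw [if_pos, mul_one, h]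
  rw [← h, hj, crossSum_unitCoeff]
  by_cases h₁ : t = 1
  · simp [unitCoeff, h₁]
  · simp only [unitCoeff, h₁, if_false, Matrix.cons_val_zero]
    omega

theorem crossForm_mem (hxI : ∀ s, x s ∈ I) (z w : M) : crossForm b p e x z w ∈ I := by
  simpa [crossForm] using sum_mem fun s _ => I.mul_mem_right _ (hxI s)

end CrossCoeff

section CrossResolution

variable {R M ι : Type*} [CommRing R] [AddCommGroup M] [Module R M] [Fintype ι] [DecidableEq ι]
  [Free R M] {x : Fin 3 → R} {p : ι → ℤ} {l : ℕ} (b : Basis ι R M)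
  (hp : Function.Injective p) (hl : Set.range p = Set.Icc (-l : ℤ) l) (e : ℤ)
  (hx : KoszulExact x R)

/-- The Pfaffian resolution of `crossForm b p e x`. -/
noncomputable def crossResolution [Module.Finite R M] : DGResolution R (Dual R M) M R :=
  pfaffianResolution crossForm_isAlt (ι_mul_topForm_labelledVector hp hl) hx
    (span_le_radical_pfaffianIdeal_crossForm (b := b) (e := e) hp hl)

variable {I : Ideal R} (hxI : ∀ s, x s ∈ I)
include hxI

theorem pfaffianVector_crossForm_mem :
    pfaffianVector (crossForm_isAlt (b := b) (p := p) (e := e) (x := x))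
      (topForm (labelledVector b p) l) ∈ I ^ l • (⊤ : Submodule R M) :=
  pfaffianVector_mem_pow_smul_top _ (crossForm_mem hxI) (topForm_mem_exteriorPower l)

variable [Module.Finite R M]

theorem crossResolution_d₁_mem (a : Dual R M) : (crossResolution b hp hl e hx).d₁ a ∈ I ^ l := by
  have h := map_mem_smul_top a (pfaffianVector_crossForm_mem (p := p) (l := l) b e hxI)
  rwa [smul_eq_mul, Ideal.mul_top] at h

theorem crossResolution_d₃_mem (c : R) :
    (crossResolution b hp hl e hx).d₃ c ∈ I ^ l • (⊤ : Submodule R M) :=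
  Submodule.smul_mem _ c (pfaffianVector_crossForm_mem b e hxI)

theorem crossResolution_mul₁₁_mem {k : ℕ} (hk : k < l) (a a' : Dual R M) :
    (crossResolution b hp hl e hx).mul₁₁ a a' ∈ I ^ k • (⊤ : Submodule R M) := by
  obtain ⟨l, rfl⟩ := Nat.exists_eq_add_one.2 (Nat.zero_lt_of_lt hk)
  exact Submodule.smul_mono_left (Ideal.pow_le_pow_right (Nat.le_of_lt_succ hk)) <|
    pfaffianMul_mem_pow_smul_top _ (crossForm_mem hxI) (topForm_mem_exteriorPower (l + 1)) a a'

end CrossResolution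

section CrossTrim

variable {R : Type} [CommRing R] {x : Fin 3 → R} {A T : Type*} [Fintype A] [Fintype T]
  {p : A ⊕ T → ℤ} {l e : ℕ}

theorem exists_row_crossCoeff_eq_unit [DecidableEq (A ⊕ T)] {M : Type*} [AddCommGroup M]
    [Module R M] (b : Basis (A ⊕ T) R M) (he : e ≤ 1)
    (hT : ∀ i ∈ Set.Icc (-1 : ℤ) 1, ∃ t, p (.inr t) = i) {t : ℤ}
    (ht : t ∈ Finset.Icc (-1 - e : ℤ) 1) :
    ∃ (r : Σ _ : Fin 3, T) (ε : Rˣ), p (.inr r.2) = crossSum r.1 - t ∧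
      ∀ j, crossCoeff b p e x r.1 (b j) (b (.inr r.2)) = if t = p j then (ε : R) else 0 := by
  have ht' := Finset.mem_Icc.1 ht
  obtain ⟨i, hi⟩ := hT (crossSum (unitCoeff t) - t) <| by
    rw [crossSum_unitCoeff]
    constructor <;> split_ifs <;> omega
  obtain ⟨ε, hε⟩ : IsUnit ((p (.inr i) - t).sign : R) := isUnit_sign_sub <| by
    rw [hi, crossSum_unitCoeff]
    split_ifs <;> omega
  exact ⟨⟨unitCoeff t, i⟩, ε, hi, fun j => hε ▸ crossCoeff_unitCoeff_apply_basis ht hi⟩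

theorem exists_hasTorClassGWithRanks_of_labels [IsLocalRing R]
    (hI : Ideal.span (Set.range x) = maximalIdeal R) (hx : KoszulExact x R) (hl : 3 ≤ l)
    (he : e ≤ 1) (hp : Function.Injective p)
    (hrange : Set.range p = Set.Icc (-l : ℤ) l)
    (hT : ∀ i ∈ Set.Icc (-1 : ℤ) 1, ∃ t, p (.inr t) = i)
    [Nonempty {a : A // p (.inl a) ∉ Finset.Icc (-1 - e : ℤ) 1}] :
    ∃ J : Ideal R, HasTorClassGWithRanks R J
      (Fintype.card A + 3 * Fintype.card T - (e + 3)) (Fintype.card T + 1)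
      (Fintype.card {a : A // p (.inl a) ∉ Finset.Icc (-1 - e : ℤ) 1}) := by
  classical
  let b : Basis (A ⊕ T) R (A ⊕ T → R) := Pi.basisFun R _
  have hlabel (t : Finset.Icc (-1 - e : ℤ) 1) : ∃ j, p j = t :=
    hrange.ge (by have := Finset.mem_Icc.1 t.2; constructor <;> omega)
  choose col hcol using hlabel
  choose row ε hrow hunit using fun t : Finset.Icc (-1 - e : ℤ) 1 =>
    exists_row_crossCoeff_eq_unit (x := x) b he hT t.2
  have hcol_range (j : A ⊕ T) : j ∈ Set.range col ↔ p j ∈ Finset.Icc (-1 - e : ℤ) 1 :=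
    ⟨by rintro ⟨t, rfl⟩; exact hcol t ▸ t.2, fun h => ⟨⟨p j, h⟩, hp (hcol _)⟩⟩
  have hxI (s : Fin 3) : x s ∈ maximalIdeal R := hI ▸ Ideal.subset_span ⟨s, rfl⟩
  have hrow_inj : Function.Injective row := fun t t' h => by
    have hsum := hrow t
    rw [h, hrow t'] at hsum
    exact Subtype.ext (sub_right_injective hsum).symm
  have hcard : Fintype.card (Finset.Icc (-1 - e : ℤ) 1) = e + 3 := by
    rw [Fintype.card_coe, Int.card_Icc]
    omega
  rw [← hcard]
  simp_rw [← hcol_range] at ‹Nonempty _› ⊢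
  exact exists_hasTorClassGWithRanks_of_trim (D := crossResolution b hp hrange e hx)
    (b := b) (ε := ε) (q := crossCoeff b p e x) hI hx
    (fun a => Ideal.pow_le_pow_right (by omega) (crossResolution_d₁_mem b hp hrange e hx hxI a))
    (crossResolution_mul₁₁_mem b hp hrange e hx hxI (by omega))
    (fun c => Submodule.smul_mono_left (Ideal.pow_le_self (by omega))
      (crossResolution_d₃_mem b hp hrange e hx hxI c))
    rfl (pfaffianResolution_mul₁₂ _ _ _ _)
    (fun j hj s t => crossCoeff_apply_basis_mem_of_notMem he hxI ((hcol_range j).not.1 hj) s _)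
    (row := row) hrow_inj fun t t' => by
      simp only [hunit, hcol, Subtype.coe_inj]
      split_ifs with h
      exacts [h ▸ rfl, rfl]

end CrossTrim

section Realizability

theorem exists_labels {l c : ℕ} (hl : 2 ≤ l) (hc : 3 ≤ c) (hcl : c ≤ 2 * l) :
    ∃ T ⊆ Finset.Icc (-l : ℤ) l, Finset.Icc (-1) 1 ⊆ T ∧ -2 ∉ T ∧ T.card = c := by
  obtain ⟨T, hTsup, hTsub, hcard⟩ := Finset.exists_subsuperset_card_eq (n := c)
    (s := Finset.Icc (-1 : ℤ) 1) (t := (Finset.Icc (-l : ℤ) l).erase (-2))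
    (fun i hi => by simp only [Finset.mem_erase, Finset.mem_Icc] at hi ⊢; omega)
    (by simpa using hc)
    (by rw [Finset.card_erase_of_mem (by simp; omega), Int.card_Icc]; omega)
  exact ⟨T, hTsub.trans (Finset.erase_subset _ _), hTsup,
    fun h => Finset.notMem_erase _ _ (hTsub h), hcard⟩

theorem card_sdiff_union_Icc {T : Finset ℤ} {l e : ℕ} (hT : T ⊆ Finset.Icc (-l : ℤ) l)
    (hsub : Finset.Icc (-1) 1 ⊆ T) (htwo : -2 ∉ T) (hl : 2 ≤ l) (he : e ≤ 1) :
    (Finset.Icc (-l : ℤ) l \ (T ∪ Finset.Icc (-1 - e : ℤ) 1)).card = 2 * l + 1 - T.card - e := by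
  have hunion : T ∪ Finset.Icc (-1 - e : ℤ) 1 = T ∪ Finset.Icc (-1 - e : ℤ) (-2) := by
    ext i
    have hi : i ∈ Finset.Icc (-1) 1 → i ∈ T := @hsub i
    grind
  have hdisj : Disjoint T (Finset.Icc (-1 - e : ℤ) (-2)) :=
    Finset.disjoint_left.2 fun i hi h => htwo <| by
      obtain rfl : i = -2 := by rw [Finset.mem_Icc] at h; omega
      exact hi
  rw [hunion, Finset.card_sdiff_of_subset (Finset.union_subset hT
    (Finset.Icc_subset_Icc (by omega) (by omega))), Finset.card_union_of_disjoint hdisj,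
    Int.card_Icc, Int.card_Icc]
  omega

variable {R : Type} [CommRing R] [IsLocalRing R] {x : Fin 3 → R}

theorem exists_hasTorClassGWithRanks (hI : Ideal.span (Set.range x) = maximalIdeal R)
    (hx : KoszulExact x R) {l e c : ℕ} (hl : 3 ≤ l) (he : e ≤ 1) (hc : 3 ≤ c)
    (hcl : c + e ≤ 2 * l) :
    ∃ J : Ideal R, HasTorClassGWithRanks R J (2 * l + 1 - c + 3 * c - (e + 3)) (c + 1)
      (2 * l + 1 - c - e) := by
  obtain ⟨T, hT, hsub, htwo, rfl⟩ := exists_labels (l := l) (c := c) (by omega) hc (by omega)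
  let A := Finset.Icc (-l : ℤ) l \ T
  let p : A ⊕ T → ℤ := Sum.elim (↑) (↑)
  have hp : Function.Injective p := Subtype.val_injective.sumElim Subtype.val_injective
    fun a t h => (Finset.mem_sdiff.1 a.2).2 (h ▸ t.2)
  have hrange : Set.range p = Set.Icc (-l : ℤ) l := by
    rw [Set.Sum.elim_range, Subtype.range_coe, Subtype.range_coe, ← Finset.coe_union,
      Finset.sdiff_union_of_subset hT, Finset.coe_Icc]
  have hA : Fintype.card A = 2 * l + 1 - T.card := by
    rw [Fintype.card_coe, Finset.card_sdiff_of_subset hT, Int.card_Icc]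
    omega
  have hgood : Fintype.card {a : A // p (.inl a) ∉ Finset.Icc (-1 - e : ℤ) 1} =
      2 * l + 1 - T.card - e := by
    rw [← card_sdiff_union_Icc hT hsub htwo (by omega) he, ← Fintype.card_coe]
    exact Fintype.card_congr <| (Equiv.subtypeSubtypeEquivSubtypeInter (· ∈ A)
      (· ∉ Finset.Icc (-1 - e : ℤ) 1)).trans (Equiv.subtypeEquivRight fun i => by grind)
  have : Nonempty {a : A // p (.inl a) ∉ Finset.Icc (-1 - e : ℤ) 1} :=
    Fintype.card_pos_iff.1 (by omega)
  rw [← hgood, ← hA, ← Fintype.card_coe T]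
  exact exists_hasTorClassGWithRanks_of_labels hI hx hl he hp hrange fun i hi =>
    ⟨⟨i, hsub (Finset.mem_Icc.2 hi)⟩, rfl⟩

theorem realizability_classG_case3_general
    (hreg : RingTheory.Sequence.IsWeaklyRegular R [x 0, x 1, x 2])
    (hx : Ideal.span {x 0, x 1, x 2} = maximalIdeal R) (m n r : ℕ)
    (harith : r + 3 * (n - 2) = m) (hr : 0 < r) (hn : 4 ≤ n) (hm : 2 * n + 1 ≤ m) :
    ∃ J : Ideal R, HasTorClassGWithRanks R J m n r := by
  have hI : Ideal.span (Set.range x) = maximalIdeal R := by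
    rw [← hx]
    congr 1
    ext
    simp [Fin.exists_fin_succ, eq_comm]
  obtain ⟨J, hJ⟩ := exists_hasTorClassGWithRanks (l := (r + n - 1) / 2) (e := (r + n) % 2)
    (c := n - 1) hI (.of_isWeaklyRegular hreg) (by omega) (by omega) (by omega) (by omega)
  refine ⟨J, ?_⟩
  convert hJ using 1 <;> omega

end Realizability

/-!
STATEMENT 16 (part of Corollary 5.8, case (3)): let `(R,𝔪,k)` be a regular local ring
of dimension 3 and `(m,n,r)` positive integers with `r = m - 3(n-2) ≥ 2`, `n ≥ 4` and
`m ≥ 2n+1 ≥ 9`.  Then there is an ideal `J ⊆ R` with `pd_R(R/J) = 3` such that `R/J`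
has Tor-algebra class `G(r)` and realizes the tuple `(m,n,r)`.
-/
theorem realizability_classG_case3
    {R : Type} [CommRing R] [IsNoetherianRing R] [IsLocalRing R]
    -- regular local of dimension 3
    (x : Fin 3 → R)
    (hreg : RingTheory.Sequence.IsRegular R [x 0, x 1, x 2])
    (hx : Ideal.span {x 0, x 1, x 2} = maximalIdeal R)
    (m n r : ℕ)
    (harith : r + 3 * (n - 2) = m) (hr : 2 ≤ r) (hn : 4 ≤ n)
    (hm : 2 * n + 1 ≤ m) (hm9 : 9 ≤ 2 * n + 1) :
    ∃ J : Ideal R, HasTorClassGWithRanks R J m n r :=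
  realizability_classG_case3_general hreg.toIsWeaklyRegular hx m n r harith (by omega) hn hm
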